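/- arXiv:2602.08044 — 7 statements merged into one kernel-verified Lean document; each statement's English description precedes it below -/
import Mathlib

section
/- Let ν > 0, ξ > 0 and a ∈ (−1, 0). Then the function K : [0,∞) → ℝ defined by K(x) = M(a, 1+ν, ξx²) satisfies K'(x) < 0 for every x > 0 and K''(x) < 0 for every x ≥ 0; in particular K is strictly decreasing on [0,∞) and strictly concave on [0,∞). -/
open MeasureTheory Real Set

/-- Pochhammer symbol (rising factorial) `(c)_k = c (c+1) ⋯ (c+k−1)`. -/
noncomputable def poch (c : ℝ) (k : ℕ) : ℝ := (ascPochhammer ℝ k).eval c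

/-- Kummer's confluent hypergeometric function
`M(a,b,z) = ∑_{k=0}^∞ ((a)_k / ((b)_k · k!)) z^k`. -/
noncomputable def kummerM (a b z : ℝ) : ℝ :=
  ∑' k : ℕ, poch a k / (poch b k * (Nat.factorial k : ℝ)) * z ^ k

/-- Termwise differentiation for series with coefficients bounded by `1/k!`. -/
lemma aux_hasDerivAt (c : ℕ → ℝ) (hc : ∀ k, |c k| ≤ 1 / (Nat.factorial k : ℝ)) (x : ℝ) :
    HasDerivAt (fun z : ℝ => ∑' k : ℕ, c k * z ^ k)
      (∑' k : ℕ, (((k : ℝ) + 1) * c (k + 1)) * x ^ k) x := by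
  set R : ℝ := |x| + 1 with hR
  have hR0 : 0 ≤ R := by positivity
  have hu : Summable (fun n : ℕ => (1 / (Nat.factorial n : ℝ)) * ((n : ℝ) * R ^ (n - 1))) := by
    rw [← summable_nat_add_iff 1]
    refine (Real.summable_pow_div_factorial R).congr ?_
    intro n
    simp only [Nat.factorial_succ, Nat.add_sub_cancel]
    push_cast
    have : (Nat.factorial n : ℝ) ≠ 0 := by positivity
    have : (n : ℝ) + 1 ≠ 0 := by positivity
    field_simp
  have hbd : ∀ (n : ℕ) (y : ℝ), y ∈ Metric.ball (0 : ℝ) R →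
      ‖c n * ((n : ℝ) * y ^ (n - 1))‖ ≤ (1 / (Nat.factorial n : ℝ)) * ((n : ℝ) * R ^ (n - 1)) := by
    intro n y hy
    have hy' : |y| ≤ R := by
      have := mem_ball_zero_iff.1 hy
      rw [Real.norm_eq_abs] at this
      exact this.le
    rw [Real.norm_eq_abs, abs_mul, abs_mul, abs_pow, Nat.abs_cast]
    have := hc n
    gcongr
  have hx : x ∈ Metric.ball (0 : ℝ) R := by
    rw [mem_ball_zero_iff, Real.norm_eq_abs, hR]; linarith
  have h0 : (0 : ℝ) ∈ Metric.ball (0 : ℝ) R := by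
    apply Metric.mem_ball_self; positivity
  have key := hasDerivAt_tsum_of_isPreconnected (g := fun (n : ℕ) (y : ℝ) => c n * y ^ n)
    (g' := fun (n : ℕ) (y : ℝ) => c n * ((n : ℝ) * y ^ (n - 1))) hu Metric.isOpen_ball
    (convex_ball (0 : ℝ) R).isPreconnected
    (fun n y _ => (hasDerivAt_pow n y).const_mul (c n)) hbd h0
    (by
      apply summable_of_ne_finset_zero (s := {0})
      intro n hn
      have : n ≠ 0 := by simpa using hn
      simp [this]) hx
  have hs : Summable (fun n : ℕ => c n * ((n : ℝ) * x ^ (n - 1))) :=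
    Summable.of_norm_bounded hu (fun n => hbd n x hx)
  rw [hs.tsum_eq_zero_add] at key
  refine key.congr_deriv ?_
  simp only [Nat.cast_zero, zero_mul, mul_zero, zero_add, Nat.add_sub_cancel]
  refine tsum_congr fun n => ?_
  push_cast
  ring

lemma aux_bound (c : ℕ → ℝ) (hc : ∀ k, |c k| ≤ 1 / (Nat.factorial k : ℝ)) (k : ℕ) :
    |((k : ℝ) + 1) * c (k + 1)| ≤ 1 / (Nat.factorial k : ℝ) := by
  have h := hc (k + 1)
  have hk : (0 : ℝ) < (k : ℝ) + 1 := by positivity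
  have hf : (0 : ℝ) < (Nat.factorial k : ℝ) := by positivity
  rw [abs_mul, abs_of_pos hk]
  rw [Nat.factorial_succ] at h
  push_cast at h
  calc ((k : ℝ) + 1) * |c (k + 1)| ≤ ((k : ℝ) + 1) * (1 / (((k : ℝ) + 1) * (Nat.factorial k : ℝ))) := by
        gcongr
    _ = _ := by field_simp

lemma aux_summable (c : ℕ → ℝ) (hc : ∀ k, |c k| ≤ 1 / (Nat.factorial k : ℝ)) (x : ℝ) :
    Summable (fun k : ℕ => c k * x ^ k) := by
  refine Summable.of_norm_bounded (Real.summable_pow_div_factorial |x|) fun n => ?_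
  rw [Real.norm_eq_abs, abs_mul, abs_pow]
  calc |c n| * |x| ^ n ≤ 1 / (Nat.factorial n : ℝ) * |x| ^ n := by
        gcongr; exact hc n
    _ = _ := by ring

lemma poch_succ' (c : ℝ) (k : ℕ) : poch c (k + 1) = poch c k * (c + k) := by
  simp [poch, ascPochhammer_succ_eval]

lemma poch_zero' (c : ℝ) : poch c 0 = 1 := by simp [poch]

lemma poch_pos' (b : ℝ) (hb : 0 < b) (k : ℕ) : 0 < poch b k := ascPochhammer_pos k b hb

lemma poch_neg' (a : ℝ) (h1 : -1 < a) (h0 : a < 0) (k : ℕ) : poch a (k + 1) < 0 := by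
  induction k with
  | zero => rw [poch_succ', poch_zero']; simpa using h0
  | succ n ih =>
    rw [poch_succ']
    apply mul_neg_of_neg_of_pos ih
    have : (0 : ℝ) ≤ n := by positivity
    push_cast
    linarith

lemma poch_abs_le (a b : ℝ) (h1 : -1 < a) (h0 : a < 0) (hb : 1 ≤ b) (k : ℕ) :
    |poch a k| ≤ poch b k := by
  induction k with
  | zero => simp [poch_zero']
  | succ n ih =>
    rw [poch_succ', poch_succ', abs_mul]
    have hn : (0 : ℝ) ≤ n := by positivity
    have h2 : |a + n| ≤ b + n := by rw [abs_le]; constructor <;> linarith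
    exact mul_le_mul ih h2 (abs_nonneg _) (poch_pos' b (by linarith) n).le

/-- Let `ν > 0`, `ξ > 0` and `a ∈ (−1,0)`. The function `K(x) = M(a, 1+ν, ξ x²)`
satisfies `K'(x) < 0` for `x > 0` and `K''(x) < 0` for `x ≥ 0`; in particular `K`
is strictly decreasing on `[0,∞)` and strictly concave on `[0,∞)`. -/
theorem kummer_decreasing_strictly_concave (ν ξ a : ℝ) (hν : 0 < ν) (hξ : 0 < ξ)
    (ha : a ∈ Set.Ioo (-1 : ℝ) 0) :
    (∀ x : ℝ, 0 < x → deriv (fun y : ℝ => kummerM a (1 + ν) (ξ * y ^ 2)) x < 0) ∧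
    (∀ x : ℝ, 0 ≤ x → deriv (deriv (fun y : ℝ => kummerM a (1 + ν) (ξ * y ^ 2))) x < 0) ∧
    StrictAntiOn (fun y : ℝ => kummerM a (1 + ν) (ξ * y ^ 2)) (Set.Ici 0) ∧
    StrictConcaveOn ℝ (Set.Ici 0) (fun y : ℝ => kummerM a (1 + ν) (ξ * y ^ 2)) := by
  obtain ⟨ha1, ha0⟩ := ha
  set b := 1 + ν with hbdef
  have hb : 1 ≤ b := by linarith
  have hb0 : 0 < b := by linarith
  let c : ℕ → ℝ := fun k => poch a k / (poch b k * (Nat.factorial k : ℝ))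
  let c1 : ℕ → ℝ := fun k => ((k : ℝ) + 1) * c (k + 1)
  let c2 : ℕ → ℝ := fun k => ((k : ℝ) + 1) * c1 (k + 1)
  have hc : ∀ k, |c k| ≤ 1 / (Nat.factorial k : ℝ) := by
    intro k
    have hp := poch_pos' b hb0 k
    have hf : (0 : ℝ) < (Nat.factorial k : ℝ) := by positivity
    simp only [c]
    rw [abs_div, abs_of_pos (mul_pos hp hf), div_le_div_iff₀ (mul_pos hp hf) hf, one_mul]
    exact mul_le_mul_of_nonneg_right (poch_abs_le a b ha1 ha0 hb k) hf.le
  have hcneg : ∀ k, c (k + 1) < 0 := by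
    intro k
    exact div_neg_of_neg_of_pos (poch_neg' a ha1 ha0 k)
      (mul_pos (poch_pos' b hb0 _) (by positivity))
  have hc1 : ∀ k, |c1 k| ≤ 1 / (Nat.factorial k : ℝ) := aux_bound c hc
  have hc1neg : ∀ k, c1 k < 0 := fun k => mul_neg_of_pos_of_neg (by positivity) (hcneg k)
  have hc2neg : ∀ k, c2 k < 0 := fun k => mul_neg_of_pos_of_neg (by positivity) (hc1neg _)
  let f1 : ℝ → ℝ := fun z => ∑' k : ℕ, c1 k * z ^ k
  let f2 : ℝ → ℝ := fun z => ∑' k : ℕ, c2 k * z ^ k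
  have hd0 : ∀ z, HasDerivAt (fun z => kummerM a b z) (f1 z) z := fun z => aux_hasDerivAt c hc z
  have hd1 : ∀ z, HasDerivAt f1 (f2 z) z := fun z => aux_hasDerivAt c1 hc1 z
  have hf1 : ∀ z, 0 ≤ z → f1 z < 0 := by
    intro z hz
    have hs := aux_summable c1 hc1 z
    simp only [f1]
    rw [hs.tsum_eq_zero_add]
    have h2 : ∑' k : ℕ, c1 (k + 1) * z ^ (k + 1) ≤ 0 :=
      tsum_nonpos fun k => mul_nonpos_of_nonpos_of_nonneg (hc1neg _).le (by positivity)
    have := hc1neg 0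
    simp only [pow_zero, mul_one]
    linarith
  have hf2 : ∀ z, 0 ≤ z → f2 z ≤ 0 := fun z hz =>
    tsum_nonpos fun k => mul_nonpos_of_nonpos_of_nonneg (hc2neg _).le (by positivity)
  have hin : ∀ x : ℝ, HasDerivAt (fun y : ℝ => ξ * y ^ 2) (2 * ξ * x) x := by
    intro x
    refine ((hasDerivAt_pow 2 x).const_mul ξ).congr_deriv ?_
    norm_num
    ring
  have hK : ∀ x : ℝ, HasDerivAt (fun y : ℝ => kummerM a b (ξ * y ^ 2))
      (f1 (ξ * x ^ 2) * (2 * ξ * x)) x := fun x => 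
    HasDerivAt.comp (h₂ := fun z => kummerM a b z) (h := fun y : ℝ => ξ * y ^ 2) x (hd0 (ξ * x ^ 2)) (hin x)
  have hKd : deriv (fun y : ℝ => kummerM a b (ξ * y ^ 2)) =
      fun x => f1 (ξ * x ^ 2) * (2 * ξ * x) := funext fun x => (hK x).deriv
  have hK2 : ∀ x : ℝ, HasDerivAt (fun x => f1 (ξ * x ^ 2) * (2 * ξ * x))
      (f2 (ξ * x ^ 2) * (2 * ξ * x) * (2 * ξ * x) + f1 (ξ * x ^ 2) * (2 * ξ)) x := by
    intro x
    have h1 : HasDerivAt (fun y : ℝ => f1 (ξ * y ^ 2)) (f2 (ξ * x ^ 2) * (2 * ξ * x)) x :=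
      HasDerivAt.comp (h₂ := f1) (h := fun y : ℝ => ξ * y ^ 2) x (hd1 (ξ * x ^ 2)) (hin x)
    have h2 : HasDerivAt (fun y : ℝ => 2 * ξ * y) (2 * ξ) x := by
      simpa using (hasDerivAt_id x).const_mul (2 * ξ)
    exact h1.mul h2
  have hcont : ContinuousOn (fun y : ℝ => kummerM a b (ξ * y ^ 2)) (Set.Ici 0) :=
    fun x _ => (hK x).continuousAt.continuousWithinAt
  have A : ∀ x : ℝ, 0 < x → deriv (fun y : ℝ => kummerM a b (ξ * y ^ 2)) x < 0 := by
    intro x hx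
    rw [hKd]
    exact mul_neg_of_neg_of_pos (hf1 _ (by positivity)) (by positivity)
  have B : ∀ x : ℝ, 0 ≤ x →
      deriv (deriv (fun y : ℝ => kummerM a b (ξ * y ^ 2))) x < 0 := by
    intro x hx
    rw [hKd, (hK2 x).deriv]
    have h1 := mul_neg_of_neg_of_pos (hf1 (ξ * x ^ 2) (by positivity)) (show 0 < 2 * ξ by positivity)
    have h2 := mul_nonpos_of_nonpos_of_nonneg (hf2 (ξ * x ^ 2) (by positivity))
      (mul_self_nonneg (2 * ξ * x))
    rw [← mul_assoc] at h2
    linarith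
  refine ⟨A, B, ?_, ?_⟩
  · refine strictAntiOn_of_deriv_neg (convex_Ici 0) hcont fun x hx => ?_
    rw [interior_Ici] at hx
    exact A x hx
  · refine strictConcaveOn_of_deriv2_neg (convex_Ici 0) hcont fun x hx => ?_
    rw [interior_Ici] at hx
    exact B x (le_of_lt hx)
end

section
/- Let ν > 0, ξ > 0 and k ∈ ℕ. Then the function Φ_{ξ,k} : (0,∞) → ℝ is twice differentiable and satisfies, for every x > 0, the eigenvalue equation −Φ_{ξ,k}''(x) + ξ²x² Φ_{ξ,k}(x) + ((ν² − 1/4)/x²) Φ_{ξ,k}(x) = ξ(4k + 2(1+ν)) Φ_{ξ,k}(x). -/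
open MeasureTheory Real Set

/-- Generalized Laguerre polynomial `L_k^{(ν)}(x) = ((1+ν)_k / k!) · M(−k, 1+ν, x)`. -/
noncomputable def laguerreL (ν : ℝ) (k : ℕ) (x : ℝ) : ℝ :=
  poch (1 + ν) k / (Nat.factorial k : ℝ) * kummerM (-(k : ℝ)) (1 + ν) x

/-- The normalized eigenfunctions
`Φ_{ξ,k}(x) = √(2ξ^{1+ν}/Γ(1+ν)) √(k!/(1+ν)_k) e^{−ξx²/2} x^{1/2+ν} L_k^{(ν)}(ξx²)`. -/
noncomputable def PhiFun (ν ξ : ℝ) (k : ℕ) (x : ℝ) : ℝ :=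
  Real.sqrt (2 * ξ ^ (1 + ν) / Real.Gamma (1 + ν)) *
    Real.sqrt ((Nat.factorial k : ℝ) / poch (1 + ν) k) *
    Real.exp (-ξ * x ^ 2 / 2) * x ^ ((1 : ℝ) / 2 + ν) * laguerreL ν k (ξ * x ^ 2)

theorem poch_succ_aux (c : ℝ) (n : ℕ) : poch c (n + 1) = poch c n * (c + n) := by
  unfold poch
  rw [ascPochhammer_succ_eval]

theorem poch_neg_zero_aux (k n : ℕ) (h : k < n) : poch (-(k : ℝ)) n = 0 := by
  induction n with
  | zero => omega
  | succ n ih =>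
    rw [poch_succ_aux]
    rcases Nat.lt_succ_iff_lt_or_eq.mp h with h | h
    · rw [ih h, zero_mul]
    · subst h; simp

theorem poch_pos_aux (b : ℝ) (hb : 0 < b) (n : ℕ) : 0 < poch b n := by
  induction n with
  | zero => simp [poch]
  | succ n ih => rw [poch_succ_aux]; positivity

theorem kummer_poly_aux (k : ℕ) (b : ℝ) (hb : 0 < b) :
    ∃ P : Polynomial ℝ, (∀ z, kummerM (-(k : ℝ)) b z = P.eval z) ∧
      ∀ z, z * P.derivative.derivative.eval z + (b - z) * P.derivative.eval z
        + k * P.eval z = 0 := by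
  set c : ℕ → ℝ := fun n => poch (-(k : ℝ)) n / (poch b n * (Nat.factorial n : ℝ)) with hc
  have hc0 : ∀ n, k < n → c n = 0 := fun n h => by simp [hc, poch_neg_zero_aux k n h]
  have hrec : ∀ n : ℕ, c (n + 1) * ((b + n) * (n + 1)) = (-(k : ℝ) + n) * c n := by
    intro n
    have h1 := (poch_pos_aux b hb n).ne'
    have h2 : (b + n) ≠ 0 := by positivity
    have h3 : (Nat.factorial n : ℝ) ≠ 0 := by positivity
    have h4 : (n : ℝ) + 1 ≠ 0 := by positivity
    simp only [hc, poch_succ_aux, Nat.factorial_succ, Nat.cast_mul, Nat.cast_add, Nat.cast_one]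
    field_simp
  let P : Polynomial ℝ := ∑ i ∈ Finset.range (k + 1), Polynomial.C (c i) * Polynomial.X ^ i
  have hP : ∀ n, P.coeff n = c n := by
    intro n
    simp only [P, Polynomial.finsetSum_coeff, Polynomial.coeff_C_mul, Polynomial.coeff_X_pow]
    simp only [mul_ite, mul_one, mul_zero, Finset.sum_ite_eq, Finset.mem_range]
    split_ifs with h
    · rfl
    · exact (hc0 n (by omega)).symm
  refine ⟨P, ?_, ?_⟩
  · intro z
    unfold kummerM
    rw [tsum_eq_sum (s := Finset.range (k + 1))]
    · simp [P, Polynomial.eval_finsetSum, hc]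
    · intro n hn
      have := hc0 n (by simpa using hn)
      simp only [hc] at this
      rw [this, zero_mul]
  · have key : Polynomial.X * P.derivative.derivative
        + (Polynomial.C b * P.derivative - Polynomial.X * P.derivative)
        + Polynomial.C (k : ℝ) * P = 0 := by
      ext n
      have h := hrec n
      rcases n with _ | n
      · simp only [Polynomial.coeff_add, Polynomial.coeff_sub, Polynomial.coeff_C_zero,
          Polynomial.mul_coeff_zero, Polynomial.coeff_X_zero, Polynomial.coeff_derivative, hP,
          Polynomial.coeff_zero]
        push_cast at h ⊢
        linarith
      · simp only [Polynomial.coeff_add, Polynomial.coeff_sub, Polynomial.coeff_C_mul,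
          Polynomial.coeff_X_mul, Polynomial.coeff_derivative, hP, Polynomial.coeff_zero]
        push_cast at h ⊢
        linarith
    intro z
    have := congrArg (Polynomial.eval z) key
    simp only [Polynomial.eval_add, Polynomial.eval_sub, Polynomial.eval_mul, Polynomial.eval_X,
      Polynomial.eval_C, Polynomial.eval_zero] at this
    linarith

theorem weight_deriv_aux (A ξ s x q : ℝ) (Q : ℝ → ℝ) (hx : 0 < x) (hQ : HasDerivAt Q q x) :
    HasDerivAt (fun x => A * Real.exp (-ξ * x ^ 2 / 2) * x ^ s * Q x)
      (A * Real.exp (-ξ * x ^ 2 / 2) * x ^ s * ((-ξ * x + s / x) * Q x + q)) x := by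
  have h1 : HasDerivAt (fun x : ℝ => -ξ * x ^ 2 / 2) (-ξ * x) x := by
    have := (((hasDerivAt_pow 2 x).const_mul (-ξ)).div_const 2)
    exact this.congr_deriv (by push_cast; ring)
  have h2 : HasDerivAt (fun x : ℝ => x ^ s) (s * x ^ (s - 1)) x :=
    Real.hasDerivAt_rpow_const (Or.inl hx.ne')
  have := ((h1.exp.const_mul A).mul h2).mul hQ
  rw [Real.rpow_sub_one hx.ne'] at this
  refine this.congr_deriv ?_
  simp only [Pi.mul_apply]
  field_simp

theorem eval_deriv_aux (P : Polynomial ℝ) (ξ x : ℝ) :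
    HasDerivAt (fun x => P.eval (ξ * x ^ 2)) (2 * ξ * x * P.derivative.eval (ξ * x ^ 2)) x := by
  have h : HasDerivAt (fun x : ℝ => ξ * x ^ 2) (2 * ξ * x) x := by
    exact ((hasDerivAt_pow 2 x).const_mul ξ).congr_deriv (by push_cast; ring)
  have := (P.hasDerivAt (ξ * x ^ 2)).comp x h
  exact this.congr_deriv (by ring)

/-- For `ν > 0`, `ξ > 0`, `k ∈ ℕ`, the function `Φ_{ξ,k}` is twice differentiable on
`(0,∞)` and satisfies `−Φ'' + ξ²x²Φ + ((ν²−1/4)/x²)Φ = ξ(4k + 2(1+ν))Φ` for `x > 0`. -/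
theorem phi_is_eigenfunction (ν ξ : ℝ) (k : ℕ) (hν : 0 < ν) (hξ : 0 < ξ) :
    (∀ x : ℝ, 0 < x → DifferentiableAt ℝ (PhiFun ν ξ k) x) ∧
    (∀ x : ℝ, 0 < x → DifferentiableAt ℝ (deriv (PhiFun ν ξ k)) x) ∧
    (∀ x : ℝ, 0 < x →
      -deriv (deriv (PhiFun ν ξ k)) x + ξ ^ 2 * x ^ 2 * PhiFun ν ξ k x
          + ((ν ^ 2 - 1 / 4) / x ^ 2) * PhiFun ν ξ k x
        = ξ * (4 * (k : ℝ) + 2 * (1 + ν)) * PhiFun ν ξ k x) := by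
  obtain ⟨P, hP, hode⟩ := kummer_poly_aux k (1 + ν) (by linarith)
  obtain ⟨A, hA⟩ : ∃ A : ℝ, PhiFun ν ξ k = fun x =>
      A * Real.exp (-ξ * x ^ 2 / 2) * x ^ ((1 : ℝ) / 2 + ν) * P.eval (ξ * x ^ 2) := by
    refine ⟨Real.sqrt (2 * ξ ^ (1 + ν) / Real.Gamma (1 + ν)) *
      Real.sqrt ((Nat.factorial k : ℝ) / poch (1 + ν) k) *
      (poch (1 + ν) k / (Nat.factorial k : ℝ)), ?_⟩
    funext x
    simp only [PhiFun, laguerreL, hP]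
    ring
  rw [hA]
  set s : ℝ := (1 : ℝ) / 2 + ν with hs
  have d1 := fun (x : ℝ) (hx : 0 < x) =>
    weight_deriv_aux A ξ s x _ _ hx (eval_deriv_aux P ξ x)
  have d2 : ∀ x : ℝ, 0 < x → HasDerivAt
      (deriv (fun x => A * Real.exp (-ξ * x ^ 2 / 2) * x ^ s * P.eval (ξ * x ^ 2)))
      (A * Real.exp (-ξ * x ^ 2 / 2) * x ^ s *
        ((-ξ * x + s / x) * ((-ξ * x + s / x) * P.eval (ξ * x ^ 2)
            + 2 * ξ * x * P.derivative.eval (ξ * x ^ 2))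
          + (((-ξ - s / x ^ 2) * P.eval (ξ * x ^ 2)
              + (-ξ * x + s / x) * (2 * ξ * x * P.derivative.eval (ξ * x ^ 2)))
            + (2 * ξ * P.derivative.eval (ξ * x ^ 2)
              + 2 * ξ * x * (2 * ξ * x * P.derivative.derivative.eval (ξ * x ^ 2)))))) x := by
    intro x hx
    have hl : HasDerivAt (fun x : ℝ => -ξ * x + s / x) (-ξ - s / x ^ 2) x := by
      have := ((hasDerivAt_id x).const_mul (-ξ)).add ((hasDerivAt_inv hx.ne').const_mul s)
      refine this.congr_deriv ?_
      field_simp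
      ring
    have hm : HasDerivAt (fun x : ℝ => 2 * ξ * x) (2 * ξ) x := by
      simpa using (hasDerivAt_id x).const_mul (2 * ξ)
    have hq := (hl.mul (eval_deriv_aux P ξ x)).add
      (hm.mul (eval_deriv_aux P.derivative ξ x))
    refine (weight_deriv_aux A ξ s x _ _ hx hq).congr_of_eventuallyEq ?_
    filter_upwards [lt_mem_nhds hx] with y hy
    exact (d1 y hy).deriv
  refine ⟨fun x hx => (d1 x hx).differentiableAt, fun x hx => (d2 x hx).differentiableAt, ?_⟩
  intro x hx
  rw [(d2 x hx).deriv]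
  have ho := hode (ξ * x ^ 2)
  beta_reduce
  generalize Polynomial.eval (ξ * x ^ 2) P.derivative.derivative = p2 at *
  generalize Polynomial.eval (ξ * x ^ 2) P.derivative = p1 at *
  generalize Polynomial.eval (ξ * x ^ 2) P = p0 at *
  generalize A * Real.exp (-ξ * x ^ 2 / 2) * x ^ s = w
  rw [hs]
  field_simp
  linear_combination (-64 * ξ * x ^ 2 * w) * ho
end

section
/- Let ν > 0, x > 0, y > 0 and z ∈ (0,1). Then the series Σ_{k=0}^∞ (k!/Γ(k+ν+1)) L_k^{(ν)}(x) L_k^{(ν)}(y) z^k converges and its sum equals (1/((1−z)(xyz)^{ν/2})) · exp( −z(x+y)/(1−z) ) · I_ν( 2√(xyz)/(1−z) ). -/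
open MeasureTheory Real Set

/-- Modified Bessel function `I_ν(z) = ∑_{m=0}^∞ (z/2)^{2m+ν} / (m! Γ(m+ν+1))`. -/
noncomputable def besselI (ν z : ℝ) : ℝ :=
  ∑' m : ℕ, (z / 2) ^ (2 * (m : ℝ) + ν) / ((Nat.factorial m : ℝ) * Real.Gamma ((m : ℝ) + ν + 1))


theorem hh_pascal (a : ℕ) (f : ℕ → ℝ) :
    ∑ p ∈ Finset.range (a + 2), ((a + 1).choose p : ℝ) * f p =
      ∑ p ∈ Finset.range (a + 1), (a.choose p : ℝ) * (f p + f (p + 1)) := by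
  have h1 : ∑ p ∈ Finset.range (a + 1), (a.choose p : ℝ) * f p
      = ∑ p ∈ Finset.range (a + 2), (a.choose p : ℝ) * f p := by
    rw [Finset.sum_range_succ _ (a + 1)]; simp
  simp only [mul_add, Finset.sum_add_distrib]
  rw [h1, Finset.sum_range_succ' _ (a + 1), Finset.sum_range_succ' _ (a + 1)]
  simp only [Nat.choose_succ_succ, Nat.cast_add, add_mul, Finset.sum_add_distrib]
  simp
  ring

theorem hh_van (b a : ℕ) : ∀ c : ℝ, 0 < c →
    ∑ p ∈ Finset.range (a + 1), (a.choose p : ℝ) * ((b.descFactorial p : ℝ) *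
      (Real.Gamma (c + a) / Real.Gamma (c + p))) = Real.Gamma (c + a + b) / Real.Gamma (c + b) := by
  induction a with
  | zero => intro c hc
            have := (Real.Gamma_pos_of_pos hc).ne'
            have := (Real.Gamma_pos_of_pos (show 0 < c + b by positivity)).ne'
            simp; field_simp
  | succ a ih =>
    intro c hc
    rw [hh_pascal]
    have ih' := ih (c + 1) (by linarith)
    have hb : Real.Gamma (c + 1 + b) = (c + b) * Real.Gamma (c + b) := by
      rw [← Real.Gamma_add_one (by positivity)]; ring_nf
    have hb0 := (Real.Gamma_pos_of_pos (show 0 < c + b by positivity)).ne'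
    have hcb : c + b ≠ 0 := by positivity
    have : Real.Gamma (c + (a + 1 : ℕ) + b) / Real.Gamma (c + b)
        = (c + b) * (Real.Gamma (c + 1 + a + b) / Real.Gamma (c + 1 + b)) := by
      rw [hb, show c + ((a + 1 : ℕ) : ℝ) + b = c + 1 + a + b by push_cast; ring]
      field_simp
    rw [this, ← ih', Finset.mul_sum]
    refine Finset.sum_congr rfl fun p _ => ?_
    have hp : Real.Gamma (c + 1 + p) = (c + p) * Real.Gamma (c + p) := by
      rw [← Real.Gamma_add_one (by positivity)]; ring_nf
    have hp0 := (Real.Gamma_pos_of_pos (show 0 < c + p by positivity)).ne'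
    have hcp : c + p ≠ 0 := by positivity
    have hD : ((b.descFactorial (p + 1) : ℕ) : ℝ) = (b - p) * b.descFactorial p := by
      rcases le_or_gt p b with h | h
      · rw [Nat.descFactorial_succ]; push_cast [h]; ring
      · simp [Nat.descFactorial_eq_zero_iff_lt.2 h, Nat.descFactorial_succ]
    rw [hD, show c + ((p + 1 : ℕ) : ℝ) = c + 1 + p by push_cast; ring, hp,
      show c + ((a + 1 : ℕ) : ℝ) = c + 1 + a by push_cast; ring]
    field_simp
    ring

noncomputable def hhg (ν : ℝ) (n : ℕ) : ℝ := Real.Gamma ((n : ℝ) + ν + 1)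

theorem hhg_pos {ν : ℝ} (hν : 0 < ν) (n : ℕ) : 0 < hhg ν n :=
  Real.Gamma_pos_of_pos (by positivity)

theorem hhg_succ {ν : ℝ} (hν : 0 < ν) (n : ℕ) : hhg ν (n + 1) = (n + ν + 1) * hhg ν n := by
  unfold hhg
  rw [← Real.Gamma_add_one (by positivity)]; push_cast; ring_nf

theorem hh_coef {ν : ℝ} (hν : 0 < ν) (i m a : ℕ) :
    ∑ n ∈ Finset.range (m + a + 1), (i.descFactorial n : ℝ) * ((m + a).choose n : ℝ) *
      (n.choose m : ℝ) * (hhg ν i * hhg ν (m + a) / hhg ν n)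
     = ((m + a).choose m : ℝ) * i.descFactorial m * hhg ν (i + (m + a) - m) := by
  rw [add_assoc m a 1, Finset.sum_range_add, Finset.sum_eq_zero, zero_add]
  swap
  · intro n hn
    rw [Nat.choose_eq_zero_of_lt (Finset.mem_range.1 hn)]; simp
  rcases lt_or_ge i m with h | h
  · rw [Finset.sum_eq_zero]
    · simp [Nat.descFactorial_eq_zero_iff_lt.2 h]
    · intro n _
      rw [Nat.descFactorial_eq_zero_iff_lt.2 (by omega : i < m + n)]; simp
  obtain ⟨b, rfl⟩ := Nat.exists_eq_add_of_le h
  have hv := hh_van b a (ν + 1 + m) (by positivity)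
  have hb0 := (hhg_pos hν (m + b)).ne'
  have e : hhg ν (m + b + (m + a) - m) = hhg ν (m + b) *
      (Real.Gamma (ν + 1 + m + a + b) / Real.Gamma (ν + 1 + m + b)) := by
    rw [show m + b + (m + a) - m = m + a + b by omega]
    have : Real.Gamma (ν + 1 + m + b) = hhg ν (m + b) := by unfold hhg; push_cast; ring_nf
    rw [this]
    field_simp
    unfold hhg; push_cast; ring_nf
  rw [e, ← hv, Finset.mul_sum, Finset.mul_sum]
  refine Finset.sum_congr rfl fun p _ => ?_
  have h1 := Nat.choose_mul (n := m + a) (k := m + p) (s := m) (by omega)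
  have h2 := Nat.descFactorial_mul_descFactorial (k := m) (m := m + p) (n := m + b) (by omega)
  simp only [Nat.add_sub_cancel_left] at h1 h2
  rw [← h2]
  have h1' : ((m + a).choose (m + p) : ℝ) * (m + p).choose m = (m + a).choose m * a.choose p := by
    exact_mod_cast h1
  have e1 : Real.Gamma (ν + 1 + m + a) = hhg ν (m + a) := by unfold hhg; push_cast; ring_nf
  have e2 : Real.Gamma (ν + 1 + m + p) = hhg ν (m + p) := by unfold hhg; push_cast; ring_nf
  rw [e1, e2, mul_assoc (Nat.cast _ : ℝ) (Nat.cast _) (Nat.cast _), h1']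
  push_cast
  ring

theorem hh_poly {ν : ℝ} (hν : 0 < ν) (i j : ℕ) (s : ℝ) :
    ∑ m ∈ Finset.range (j + 1), (j.choose m : ℝ) * i.descFactorial m * hhg ν (i + j - m) * s ^ m
     = ∑ n ∈ Finset.range (j + 1), (i.descFactorial n : ℝ) * (j.choose n : ℝ) *
        (hhg ν i * hhg ν j / hhg ν n) * (1 + s) ^ n := by
  have hpow : ∀ n ∈ Finset.range (j + 1),
      (1 + s) ^ n = ∑ m ∈ Finset.range (j + 1), (n.choose m : ℝ) * s ^ m := by
    intro n hn
    rw [add_comm, add_pow]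
    have : Finset.range (n + 1) ⊆ Finset.range (j + 1) := by
      intro x; simp at hn ⊢; omega
    rw [← Finset.sum_subset this]
    · refine Finset.sum_congr rfl fun m _ => by simp; ring
    · intro x _ hx
      rw [Nat.choose_eq_zero_of_lt (by simpa using hx)]; simp
  have hR : ∑ n ∈ Finset.range (j + 1), (i.descFactorial n : ℝ) * (j.choose n : ℝ) *
        (hhg ν i * hhg ν j / hhg ν n) * (1 + s) ^ n =
      ∑ n ∈ Finset.range (j + 1), ∑ m ∈ Finset.range (j + 1),
        (i.descFactorial n : ℝ) * (j.choose n : ℝ) *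
        (hhg ν i * hhg ν j / hhg ν n) * ((n.choose m : ℝ) * s ^ m) :=
    Finset.sum_congr rfl fun n hn => by rw [hpow n hn, Finset.mul_sum]
  rw [hR, Finset.sum_comm]
  refine Finset.sum_congr rfl fun m hm => ?_
  obtain ⟨a, rfl⟩ := Nat.exists_eq_add_of_le (Nat.lt_succ_iff.1 (Finset.mem_range.1 hm))
  rw [← hh_coef hν, Finset.sum_mul]
  refine Finset.sum_congr rfl fun n _ => by ring

theorem hh_desc (k i j : ℕ) : ((k.descFactorial i : ℝ) * k.descFactorial j) =
    ∑ m ∈ Finset.range (j + 1), (j.choose m : ℝ) * i.descFactorial m *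
      k.descFactorial (i + j - m) := by
  rcases lt_or_ge k i with h | h
  · rw [Finset.sum_eq_zero]
    · simp [Nat.descFactorial_eq_zero_iff_lt.2 h]
    · intro m hm
      have := Finset.mem_range.1 hm
      rw [Nat.descFactorial_eq_zero_iff_lt.2 (by omega : k < i + j - m)]; simp
  obtain ⟨b, rfl⟩ := Nat.exists_eq_add_of_le h
  rw [Nat.descFactorial_eq_factorial_mul_choose (i + b) j, Nat.add_choose_eq,
    Finset.Nat.sum_antidiagonal_eq_sum_range_succ_mk]
  push_cast
  rw [Finset.mul_sum, Finset.mul_sum]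
  refine Finset.sum_congr rfl fun m hm => ?_
  have hm := Finset.mem_range.1 hm
  have h2 := Nat.descFactorial_mul_descFactorial (k := i) (m := i + j - m) (n := i + b) (by omega)
  rw [← h2, show i + j - m - i = j - m by omega, Nat.add_sub_cancel_left,
    Nat.descFactorial_eq_factorial_mul_choose b, Nat.descFactorial_eq_factorial_mul_choose i m,
    ← Nat.choose_mul_factorial_mul_factorial (show m ≤ j by omega)]
  push_cast
  ring

theorem hh_poch {ν : ℝ} (hν : 0 < ν) (n l : ℕ) : poch (n + ν + 1) l = hhg ν (n + l) / hhg ν n := by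
  have h0 := (hhg_pos hν n).ne'
  induction l with
  | zero => simp [poch, h0]
  | succ l ih =>
    have : poch (n + ν + 1) (l + 1) = poch (n + ν + 1) l * (n + ν + 1 + l) := by
      simp [poch, ascPochhammer_succ_eval]
    rw [this, ih, ← add_assoc, hhg_succ hν]
    push_cast
    field_simp
    ring

theorem hh_binom (a z : ℝ) (hz : z ∈ Set.Ioo (0 : ℝ) 1) :
    HasSum (fun l : ℕ => poch a l / (l.factorial : ℝ) * z ^ l) ((1 - z) ^ (-a)) := by
  have hmem : z ∈ Metric.eball (0 : ℝ) 1 := by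
    rw [← ENNReal.ofReal_one, Metric.eball_ofReal]
    simp only [Metric.mem_ball, dist_zero_right, Real.norm_eq_abs, abs_lt]
    constructor <;> linarith [hz.1, hz.2]
  have h := (Real.one_div_one_sub_rpow_hasFPowerSeriesOnBall_zero a).hasSum hmem
  simp only [zero_add] at h
  rw [one_div, ← Real.rpow_neg (by linarith [hz.2])] at h
  refine h.congr_fun ?_
  intro l
  rw [FormalMultilinearSeries.ofScalars_apply_eq]
  have h1 : Ring.choose (a + l - 1) l = Ring.multichoose a l := by
    rw [Ring.choose]; congr 1; ring
  have h2 := Ring.factorial_nsmul_multichoose_eq_ascPochhammer a l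
  have h3 : (l.factorial : ℝ) * Ring.multichoose a l = poch a l := by
    rw [poch, ← nsmul_eq_mul, h2]
    exact Polynomial.ascPochhammer_smeval_eq_eval a l
  rw [h1, ← h3, smul_eq_mul]
  have : (l.factorial : ℝ) ≠ 0 := by positivity
  field_simp

theorem hh_stepb {ν z : ℝ} (hν : 0 < ν) (hz : z ∈ Set.Ioo (0 : ℝ) 1) (n : ℕ) :
    HasSum (fun k : ℕ => (k.descFactorial n : ℝ) / (k.factorial : ℝ) * hhg ν k * z ^ k)
      (hhg ν n * z ^ n * (1 - z) ^ (-((n : ℝ) + ν + 1))) := by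
  have hinj : Function.Injective (fun l : ℕ => n + l) := add_right_injective n
  refine (hinj.hasSum_iff ?_).1 ?_
  · intro k hk
    have : k < n := by
      by_contra h
      exact hk ⟨k - n, by simp only; omega⟩
    simp [Nat.descFactorial_eq_zero_iff_lt.2 this]
  · have h := (hh_binom ((n : ℝ) + ν + 1) z hz).mul_left (hhg ν n * z ^ n)
    refine h.congr_fun ?_
    intro l
    have h0 := (hhg_pos hν n).ne'
    have hf := Nat.factorial_mul_descFactorial (show n ≤ n + l by omega)
    rw [Nat.add_sub_cancel_left] at hf
    have hl : (l.factorial : ℝ) ≠ 0 := by positivity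
    have hd : ((n + l).descFactorial n : ℝ) ≠ 0 := by
      have := Nat.descFactorial_pos.2 (show n ≤ n + l by omega)
      positivity
    simp only [Function.comp]
    rw [hh_poch hν, ← hf, pow_add]
    push_cast
    field_simp

noncomputable def hhR (ν z X Y : ℝ) (i j m : ℕ) : ℝ :=
  (i.descFactorial m : ℝ) * j.choose m / ((i.factorial : ℝ) * j.factorial * hhg ν m) *
    ((z / (1 - z) * X) ^ i * (z / (1 - z) * Y) ^ j * (1 / z) ^ m * (1 - z) ^ (-(ν + 1)))

noncomputable def hhT (ν z X Y : ℝ) (i j k : ℕ) : ℝ :=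
  (k.descFactorial i : ℝ) * k.descFactorial j / (k.factorial : ℝ) * hhg ν k * z ^ k *
    (X ^ i / (i.factorial * hhg ν i) * (Y ^ j / (j.factorial * hhg ν j)))

theorem hh_sumk {ν z : ℝ} (hν : 0 < ν) (hz : z ∈ Set.Ioo (0 : ℝ) 1) (X Y : ℝ) (i j : ℕ) :
    HasSum (fun k => hhT ν z X Y i j k) (∑ m ∈ Finset.range (j + 1), hhR ν z X Y i j m) := by
  have hz0 : z ≠ 0 := hz.1.ne'
  have hz1 : 0 < 1 - z := by linarith [hz.2]
  set Q : ℝ := X ^ i / (i.factorial * hhg ν i) * (Y ^ j / (j.factorial * hhg ν j)) with hQ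
  have h1 : ∀ m ∈ Finset.range (j + 1),
      HasSum (fun k : ℕ => (j.choose m : ℝ) * i.descFactorial m *
        ((k.descFactorial (i + j - m) : ℝ) / (k.factorial : ℝ) * hhg ν k * z ^ k))
      ((j.choose m : ℝ) * i.descFactorial m *
        (hhg ν (i + j - m) * z ^ (i + j - m) * (1 - z) ^ (-(((i + j - m : ℕ) : ℝ) + ν + 1)))) :=
    fun m _ => (hh_stepb hν hz _).mul_left _
  have h2 := (hasSum_sum h1).mul_right Q
  have hfun : (fun k => hhT ν z X Y i j k) = fun k : ℕ =>
      (∑ m ∈ Finset.range (j + 1), (j.choose m : ℝ) * i.descFactorial m *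
        ((k.descFactorial (i + j - m) : ℝ) / (k.factorial : ℝ) * hhg ν k * z ^ k)) * Q := by
    funext k
    rw [hhT, hh_desc, ← hQ]
    congr 1
    rw [Finset.sum_div, Finset.sum_mul, Finset.sum_mul]
    refine Finset.sum_congr rfl fun m _ => by ring
  have hval : (∑ m ∈ Finset.range (j + 1), hhR ν z X Y i j m) =
      (∑ m ∈ Finset.range (j + 1), (j.choose m : ℝ) * i.descFactorial m *
        (hhg ν (i + j - m) * z ^ (i + j - m) * (1 - z) ^ (-(((i + j - m : ℕ) : ℝ) + ν + 1)))) * Q := by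
    have hp := hh_poly hν i j ((1 - z) / z)
    have hs : 1 + (1 - z) / z = 1 / z := by field_simp; ring
    rw [hs] at hp
    have hL : ∑ m ∈ Finset.range (j + 1), ((j.choose m : ℝ) * i.descFactorial m *
        (hhg ν (i + j - m) * z ^ (i + j - m) * (1 - z) ^ (-(((i + j - m : ℕ) : ℝ) + ν + 1))))
        = (∑ m ∈ Finset.range (j + 1), (j.choose m : ℝ) * i.descFactorial m *
            hhg ν (i + j - m) * ((1 - z) / z) ^ m) *
          ((z / (1 - z)) ^ (i + j) * (1 - z) ^ (-(ν + 1))) := by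
      rw [Finset.sum_mul]
      refine Finset.sum_congr rfl fun m hm => ?_
      have hm : m ≤ i + j := by have := Finset.mem_range.1 hm; omega
      obtain ⟨d, hd⟩ := Nat.exists_eq_add_of_le hm
      rw [hd, Nat.add_sub_cancel_left,
        show (-((d : ℝ) + ν + 1)) = -(ν + 1) - (d : ℝ) by ring, Real.rpow_sub_natCast hz1.ne',
        pow_add, div_pow, div_pow, div_pow]
      field_simp
    rw [hL, hp, Finset.sum_mul, Finset.sum_mul]
    refine Finset.sum_congr rfl fun m _ => ?_
    have := (hhg_pos hν i).ne'
    have := (hhg_pos hν j).ne'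
    have := (hhg_pos hν m).ne'
    have : (i.factorial : ℝ) ≠ 0 := by positivity
    have : (j.factorial : ℝ) ≠ 0 := by positivity
    rw [hQ, hhR, mul_pow, mul_pow, pow_add]
    field_simp
  rw [hfun, hval]
  exact h2

theorem hhg_ge {ν : ℝ} (hν : 0 < ν) (n : ℕ) : hhg ν 0 ≤ hhg ν n := by
  induction n with
  | zero => exact le_rfl
  | succ n ih =>
    rw [hhg_succ hν]
    have := hhg_pos hν n
    have h : (0 : ℝ) ≤ n := by positivity
    nlinarith

theorem hh_bsum {ν : ℝ} (hν : 0 < ν) (w : ℝ) :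
    Summable (fun m : ℕ => ‖w ^ m / ((m.factorial : ℝ) * hhg ν m)‖) := by
  refine Summable.of_nonneg_of_le (fun _ => norm_nonneg _) (fun m => ?_)
    ((Real.summable_pow_div_factorial |w|).div_const (hhg ν 0))
  have h0 := hhg_pos hν 0
  have hm := hhg_pos hν m
  rw [Real.norm_eq_abs, abs_div, abs_pow, abs_of_pos (by positivity : 0 < (m.factorial : ℝ) * hhg ν m),
    div_div]
  gcongr
  exact hhg_ge hν m

theorem hh_exp (w : ℝ) : HasSum (fun n : ℕ => w ^ n / (n.factorial : ℝ)) (Real.exp w) := by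
  rw [Real.exp_eq_exp_ℝ]; exact NormedSpace.expSeries_div_hasSum_exp w

theorem hh_mul {ι κ : Type} {f : ι → ℝ} {g : κ → ℝ} {a b : ℝ} (hf : HasSum f a)
    (hg : HasSum g b) : HasSum (fun q : ι × κ => f q.1 * g q.2) (a * b) :=
  hf.mul hg (summable_mul_of_summable_norm hf.summable.abs hg.summable.abs)

noncomputable def hhTot (ν z X Y : ℝ) : ℝ :=
  Real.exp (z / (1 - z) * X) * Real.exp (z / (1 - z) * Y) *
    ((∑' m : ℕ, (z / (1 - z) ^ 2 * (X * Y)) ^ m / ((m.factorial : ℝ) * hhg ν m)) *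
      (1 - z) ^ (-(ν + 1)))

theorem hh_R {ν z : ℝ} (hν : 0 < ν) (hz : z ∈ Set.Ioo (0 : ℝ) 1) (X Y : ℝ) :
    HasSum (fun q : (ℕ × ℕ) × ℕ => hhR ν z X Y q.1.1 q.1.2 q.2) (hhTot ν z X Y) := by
  have hz0 : z ≠ 0 := hz.1.ne'
  have hz1 : 1 - z ≠ 0 := by linarith [hz.2]
  have hinj : Function.Injective
      (fun q : (ℕ × ℕ) × ℕ => ((q.1.1 + q.2, q.1.2 + q.2), q.2)) := by
    rintro ⟨⟨a, b⟩, c⟩ ⟨⟨a', b'⟩, c'⟩ h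
    simp only [Prod.mk.injEq] at h ⊢
    omega
  refine (hinj.hasSum_iff ?_).1 ?_
  · rintro ⟨⟨i, j⟩, m⟩ h
    have : i < m ∨ j < m := by
      by_contra hc
      push Not at hc
      refine h ⟨((i - m, j - m), m), ?_⟩
      change ((i - m + m, j - m + m), m) = ((i, j), m)
      rw [Nat.sub_add_cancel hc.1, Nat.sub_add_cancel hc.2]
    rcases this with h | h
    · simp [hhR, Nat.descFactorial_eq_zero_iff_lt.2 h]
    · simp [hhR, Nat.choose_eq_zero_of_lt h]
  · have hb2 := (hh_bsum hν (z / (1 - z) ^ 2 * (X * Y))).of_norm.hasSum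
    have hE := hh_mul (hh_exp (z / (1 - z) * X)) (hh_exp (z / (1 - z) * Y))
    have hE2 := (hh_mul hE hb2).mul_right ((1 - z) ^ (-(ν + 1)))
    rw [hhTot, ← mul_assoc]
    refine hE2.congr_fun ?_
    rintro ⟨⟨p, q⟩, m⟩
    simp only [Function.comp, hhR]
    have f1 := Nat.factorial_mul_descFactorial (show m ≤ p + m by omega)
    have f2 := Nat.choose_mul_factorial_mul_factorial (show m ≤ q + m by omega)
    rw [Nat.add_sub_cancel] at f1 f2
    have hd := Nat.descFactorial_pos.2 (show m ≤ p + m by omega)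
    have hc := Nat.choose_pos (show m ≤ q + m by omega)
    have hd' : ((p + m).descFactorial m : ℝ) ≠ 0 := by positivity
    have hc' : ((q + m).choose m : ℝ) ≠ 0 := by positivity
    have := (hhg_pos hν m).ne'
    have : (p.factorial : ℝ) ≠ 0 := by positivity
    have : (q.factorial : ℝ) ≠ 0 := by positivity
    have : (m.factorial : ℝ) ≠ 0 := by positivity
    rw [← f1, ← f2]
    push_cast
    simp only [mul_pow, div_pow, pow_add, ← pow_mul, one_pow]
    rw [mul_comm 2 m, pow_mul]
    field_simp

theorem hh_S {ν z : ℝ} (hν : 0 < ν) (hz : z ∈ Set.Ioo (0 : ℝ) 1) (X Y : ℝ) :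
    HasSum (fun q : ℕ × ℕ => ∑ m ∈ Finset.range (q.2 + 1), hhR ν z X Y q.1 q.2 m)
      (hhTot ν z X Y) := by
  refine (hh_R hν hz X Y).prod_fiberwise fun q => ?_
  refine hasSum_sum_of_ne_finset_zero fun m hm => ?_
  have : q.2 < m := by simpa using hm
  simp [hhR, Nat.choose_eq_zero_of_lt this]

theorem hh_T {ν z : ℝ} (hν : 0 < ν) (hz : z ∈ Set.Ioo (0 : ℝ) 1) (X Y : ℝ) :
    HasSum (fun q : (ℕ × ℕ) × ℕ => hhT ν z X Y q.1.1 q.1.2 q.2) (hhTot ν z X Y) := by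
  have habs : ∀ q : (ℕ × ℕ) × ℕ,
      ‖hhT ν z X Y q.1.1 q.1.2 q.2‖ = hhT ν z |X| |Y| q.1.1 q.1.2 q.2 := by
    rintro ⟨⟨i, j⟩, k⟩
    simp [hhT, abs_mul, abs_div, abs_of_pos (hhg_pos hν _), abs_of_pos hz.1]
  have hs : Summable (fun q : (ℕ × ℕ) × ℕ => hhT ν z X Y q.1.1 q.1.2 q.2) := by
    refine Summable.of_norm ?_
    simp only [habs]
    refine (summable_prod_of_nonneg ?_).2 ⟨fun q => (hh_sumk hν hz _ _ q.1 q.2).summable, ?_⟩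
    · intro q
      simp only [Pi.zero_apply]
      rw [← habs]; exact norm_nonneg _
    · simp only [(hh_sumk hν hz _ _ _ _).tsum_eq]
      exact (hh_S hν hz _ _).summable
  have h1 := hs.hasSum
  have h2 := h1.prod_fiberwise (fun q => hh_sumk hν hz X Y q.1 q.2)
  rwa [h2.unique (hh_S hν hz X Y)] at h1

theorem hh_laguerre {ν : ℝ} (hν : 0 < ν) (k : ℕ) (x : ℝ) :
    HasSum (fun i : ℕ => (k.descFactorial i : ℝ) * hhg ν k / (k.factorial : ℝ) *
      ((-x) ^ i / (i.factorial * hhg ν i))) (laguerreL ν k x) := by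
  have hterm : ∀ i : ℕ, poch (1 + ν) k / (k.factorial : ℝ) *
      (poch (-(k : ℝ)) i / (poch (1 + ν) i * (i.factorial : ℝ)) * x ^ i) =
      (k.descFactorial i : ℝ) * hhg ν k / (k.factorial : ℝ) *
      ((-x) ^ i / (i.factorial * hhg ν i)) := by
    intro i
    have h1 : ∀ l, poch (1 + ν) l = hhg ν l / hhg ν 0 := by
      intro l
      have := hh_poch hν 0 l
      rw [zero_add] at this
      rw [← this]; congr 1; push_cast; ring
    have h2 : poch (-(k : ℝ)) i = (-1) ^ i * k.descFactorial i := by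
      rw [poch, ascPochhammer_eval_neg_eq_descPochhammer, descPochhammer_eval_eq_descFactorial]
    have := (hhg_pos hν 0).ne'
    have := (hhg_pos hν i).ne'
    rw [h1, h1, h2, neg_pow x]
    field_simp
  rw [laguerreL, kummerM, ← tsum_mul_left]
  simp only [hterm]
  refine Summable.hasSum (summable_of_ne_finset_zero (s := Finset.range (k + 1)) fun i hi => ?_)
  have : k < i := by simpa using hi
  simp [Nat.descFactorial_eq_zero_iff_lt.2 this]

theorem hh_main {ν z : ℝ} (hν : 0 < ν) (hz : z ∈ Set.Ioo (0 : ℝ) 1) (x y : ℝ) :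
    HasSum (fun k : ℕ =>
      (Nat.factorial k : ℝ) / Real.Gamma ((k : ℝ) + ν + 1) *
        laguerreL ν k x * laguerreL ν k y * z ^ k) (hhTot ν z (-x) (-y)) := by
  have h := (Equiv.prodComm ℕ (ℕ × ℕ)).hasSum_iff.2 (hh_T hν hz (-x) (-y))
  refine h.prod_fiberwise fun k => ?_
  have hm := (hh_mul (hh_laguerre hν k x) (hh_laguerre hν k y)).mul_left
      ((Nat.factorial k : ℝ) / hhg ν k * z ^ k)
  have e : (Nat.factorial k : ℝ) / Real.Gamma ((k : ℝ) + ν + 1) *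
        laguerreL ν k x * laguerreL ν k y * z ^ k =
      (Nat.factorial k : ℝ) / hhg ν k * z ^ k * (laguerreL ν k x * laguerreL ν k y) := by
    rw [hhg]; ring
  rw [e]
  refine hm.congr_fun ?_
  rintro ⟨i, j⟩
  simp only [Function.comp, Equiv.prodComm_apply, Prod.swap, hhT]
  have := (hhg_pos hν k).ne'
  have : (k.factorial : ℝ) ≠ 0 := by positivity
  field_simp

/-- Hardy–Hille summation formula: for `ν, x, y > 0` and `z ∈ (0,1)`, the series
`∑_k (k!/Γ(k+ν+1)) L_k^{(ν)}(x) L_k^{(ν)}(y) z^k` converges, with sum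
`(1/((1−z)(xyz)^{ν/2})) exp(−z(x+y)/(1−z)) I_ν(2√(xyz)/(1−z))`. -/
theorem laguerre_summation_formula (ν x y z : ℝ) (hν : 0 < ν) (hx : 0 < x) (hy : 0 < y)
    (hz : z ∈ Set.Ioo (0 : ℝ) 1) :
    Summable (fun k : ℕ =>
      (Nat.factorial k : ℝ) / Real.Gamma ((k : ℝ) + ν + 1) *
        laguerreL ν k x * laguerreL ν k y * z ^ k) ∧
    ∑' k : ℕ,
        (Nat.factorial k : ℝ) / Real.Gamma ((k : ℝ) + ν + 1) *
          laguerreL ν k x * laguerreL ν k y * z ^ k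
      = 1 / ((1 - z) * (x * y * z) ^ (ν / 2)) *
          Real.exp (-(z * (x + y)) / (1 - z)) *
          besselI ν (2 * Real.sqrt (x * y * z) / (1 - z)) := by
  have hm := hh_main hν hz x y
  refine ⟨hm.summable, ?_⟩
  rw [hm.tsum_eq, hhTot, ← Real.exp_add, besselI]
  have hz1 : 0 < 1 - z := by linarith [hz.2]
  have hP : 0 < x * y * z := mul_pos (mul_pos hx hy) hz.1
  have hb : ∀ m : ℕ, (2 * Real.sqrt (x * y * z) / (1 - z) / 2) ^ (2 * (m : ℝ) + ν) /
      ((Nat.factorial m : ℝ) * Real.Gamma ((m : ℝ) + ν + 1)) =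
      ((x * y * z) ^ (ν / 2) * (1 - z) ^ (-ν)) *
      ((z / (1 - z) ^ 2 * (-x * -y)) ^ m / ((m.factorial : ℝ) * hhg ν m)) := by
    intro m
    have e1 : 2 * Real.sqrt (x * y * z) / (1 - z) / 2 = Real.sqrt (x * y * z) / (1 - z) := by ring
    have hq : 0 < Real.sqrt (x * y * z) / (1 - z) := div_pos (Real.sqrt_pos.2 hP) hz1
    have e2 : (Real.sqrt (x * y * z) / (1 - z)) ^ 2 = z / (1 - z) ^ 2 * (-x * -y) := by
      rw [div_pow, Real.sq_sqrt hP.le]; ring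
    have e3 : Real.sqrt (x * y * z) ^ ν = (x * y * z) ^ (ν / 2) := by
      rw [Real.sqrt_eq_rpow, ← Real.rpow_mul hP.le]; congr 1; ring
    rw [e1, Real.rpow_add hq, show (2 * (m : ℝ)) = ((2 * m : ℕ) : ℝ) by push_cast; ring,
      Real.rpow_natCast, pow_mul, e2, Real.div_rpow (Real.sqrt_nonneg _) hz1.le, e3,
      Real.rpow_neg hz1.le, hhg]
    ring
  simp only [hb]
  rw [tsum_mul_left]
  have hQ : (x * y * z) ^ (ν / 2) ≠ 0 := (Real.rpow_pos_of_pos hP _).ne'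
  have hr : (1 - z) ^ (-(ν + 1)) = (1 - z) ^ (-ν) / (1 - z) := by
    rw [show -(ν + 1) = -ν - 1 by ring, Real.rpow_sub_one hz1.ne']
  have hexp : z / (1 - z) * -x + z / (1 - z) * -y = -(z * (x + y)) / (1 - z) := by
    field_simp; ring
  rw [hr, hexp]
  generalize (x * y * z) ^ (ν / 2) = Q at hQ ⊢
  generalize (∑' m : ℕ, (z / (1 - z) ^ 2 * (-x * -y)) ^ m / ((m.factorial : ℝ) * hhg ν m)) = S
  field_simp
end

section
/- Let ν > 0, L > 0, T > 0 and ξ > 0, and set θ(t) = ξ coth(2ξt) and c = ν² − 1/4. Let g : (0,T) × [0,L] → ℝ be smooth (infinitely differentiable) with g(t,0) = g(t,L) = 0 for every t ∈ (0,T). Define P₁g = −∂_x²g + (L²/2)θ'(t)g + (c/x²)g, P₂g = ∂_t g + 2θ(t) x ∂_x g + θ(t) g, and D(t) = ∫₀^L ( (∂_x g(t,x))² + (L²/2)θ'(t) g(t,x)² + (c/x²) g(t,x)² ) dx. Then D is differentiable on (0,T) and for every t ∈ (0,T): ∫₀^L P₁g(t,x) · P₂g(t,x) dx = (1/2) D'(t)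 + 2θ(t) D(t) − θ(t) · L · (∂_x g(t,L))². -/
open MeasureTheory Real Set

/-- `θ(t) = ξ coth(2ξt)`. -/
noncomputable def theta (ξ : ℝ) : ℝ → ℝ :=
  fun t => ξ * (Real.cosh (2 * ξ * t) / Real.sinh (2 * ξ * t))

/-- `P₁g = −∂_x²g + (L²/2)θ'(t)g + (c/x²)g` with `c = ν² − 1/4`. -/
noncomputable def P1 (ν L ξ : ℝ) (g : ℝ → ℝ → ℝ) (t x : ℝ) : ℝ :=
  -(derivWithin (derivWithin (fun y => g t y) (Set.Icc 0 L)) (Set.Icc 0 L) x)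
    + L ^ 2 / 2 * deriv (theta ξ) t * g t x + ((ν ^ 2 - 1 / 4) / x ^ 2) * g t x

/-- `P₂g = ∂_t g + 2θ(t) x ∂_x g + θ(t) g`. -/
noncomputable def P2 (L ξ : ℝ) (g : ℝ → ℝ → ℝ) (t x : ℝ) : ℝ :=
  deriv (fun s => g s x) t + 2 * theta ξ t * x * derivWithin (fun y => g t y) (Set.Icc 0 L) x
    + theta ξ t * g t x

/-- `D(t) = ∫₀^L ((∂_x g)² + (L²/2)θ'(t) g² + (c/x²) g²) dx`. -/
noncomputable def Dfun (ν L ξ : ℝ) (g : ℝ → ℝ → ℝ) (t : ℝ) : ℝ :=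
  ∫ x in (0 : ℝ)..L,
    ((derivWithin (fun y => g t y) (Set.Icc 0 L) x) ^ 2
      + L ^ 2 / 2 * deriv (theta ξ) t * (g t x) ^ 2
      + ((ν ^ 2 - 1 / 4) / x ^ 2) * (g t x) ^ 2)


lemma theta_hasDerivAt (ξ t : ℝ) (hξ : 0 < ξ) (ht : 0 < t) :
    HasDerivAt (theta ξ) (2 * (ξ ^ 2 - theta ξ t ^ 2)) t := by
  have hs : Real.sinh (2 * ξ * t) ≠ 0 := by
    have : 0 < Real.sinh (2 * ξ * t) := Real.sinh_pos_iff.2 (by positivity)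
    exact this.ne'
  have h1 : HasDerivAt (fun t : ℝ => 2 * ξ * t) (2 * ξ) t := by
    simpa using (hasDerivAt_id t).const_mul (2 * ξ)
  have h := ((h1.cosh).div (h1.sinh) hs).const_mul ξ
  unfold theta
  refine h.congr_deriv ?_
  field_simp

lemma theta_deriv (ξ t : ℝ) (hξ : 0 < ξ) (ht : 0 < t) :
    HasDerivAt (deriv (theta ξ)) (-4 * theta ξ t * deriv (theta ξ) t) t := by
  have h0 := theta_hasDerivAt ξ t hξ ht
  have h1 : HasDerivAt (fun s => 2 * (ξ ^ 2 - theta ξ s ^ 2))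
      (-4 * theta ξ t * deriv (theta ξ) t) t := by
    rw [h0.deriv]
    refine (((h0.pow 2).const_sub (ξ ^ 2)).const_mul 2).congr_deriv ?_
    simp; ring
  refine h1.congr_of_eventuallyEq ?_
  filter_upwards [lt_mem_nhds ht] with s hs
  exact (theta_hasDerivAt ξ s hξ hs).deriv

lemma partials (L T : ℝ) (hL : 0 < L) (G : ℝ × ℝ → ℝ)
    (hG : ContDiffOn ℝ (⊤ : ℕ∞) G (Set.Ioo 0 T ×ˢ Set.Icc 0 L)) :
    ∃ Gx Gt : ℝ × ℝ → ℝ,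
      ContDiffOn ℝ (⊤ : ℕ∞) Gx (Set.Ioo 0 T ×ˢ Set.Icc 0 L) ∧
      ContDiffOn ℝ (⊤ : ℕ∞) Gt (Set.Ioo 0 T ×ˢ Set.Icc 0 L) ∧
      (∀ t ∈ Set.Ioo 0 T, ∀ x ∈ Set.Icc 0 L,
        HasDerivWithinAt (fun y => G (t, y)) (Gx (t, x)) (Set.Icc 0 L) x) ∧
      (∀ t ∈ Set.Ioo 0 T, ∀ x ∈ Set.Icc 0 L,
        HasDerivAt (fun s => G (s, x)) (Gt (t, x)) t) ∧
      (∀ p ∈ Set.Ioo 0 T ×ˢ Set.Ioo 0 L, Gx p = fderiv ℝ G p (0, 1) ∧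
        Gt p = fderiv ℝ G p (1, 0)) := by
  set S := Set.Ioo (0:ℝ) T ×ˢ Set.Icc (0:ℝ) L with hS
  have hU : UniqueDiffOn ℝ S := isOpen_Ioo.uniqueDiffOn.prod (uniqueDiffOn_Icc hL)
  have hF : ContDiffOn ℝ (⊤ : ℕ∞) (fderivWithin ℝ G S) S :=
    hG.fderivWithin hU (by simp)
  have hd : ∀ p ∈ S, HasFDerivWithinAt G (fderivWithin ℝ G S p) S p := fun p hp =>
    (hG.differentiableOn (by simp) p hp).hasFDerivWithinAt
  refine ⟨fun p => fderivWithin ℝ G S p (0, 1), fun p => fderivWithin ℝ G S p (1, 0),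
    hF.clm_apply contDiffOn_const, hF.clm_apply contDiffOn_const, ?_, ?_, ?_⟩
  · intro t ht x hx
    have h1 : HasDerivWithinAt (fun y : ℝ => (t, y)) ((0:ℝ), (1:ℝ)) (Set.Icc 0 L) x :=
      (hasDerivWithinAt_const x _ t).prodMk (hasDerivWithinAt_id x _)
    exact (hd (t, x) ⟨ht, hx⟩).comp_hasDerivWithinAt x h1 (fun y hy => ⟨ht, hy⟩)
  · intro t ht x hx
    have h1 : HasDerivWithinAt (fun s : ℝ => (s, x)) ((1:ℝ), (0:ℝ)) (Set.Ioo 0 T) t :=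
      (hasDerivWithinAt_id t _).prodMk (hasDerivWithinAt_const t _ x)
    have h2 : HasDerivWithinAt (fun s => G (s, x)) (fderivWithin ℝ G S (t, x) (1, 0))
        (Set.Ioo 0 T) t :=
      HasFDerivWithinAt.comp_hasDerivWithinAt (f := fun s : ℝ => (s, x)) (t := S) t
        (hd (t, x) ⟨ht, hx⟩) h1 (fun y hy => ⟨hy, hx⟩)
    exact h2.hasDerivAt (isOpen_Ioo.mem_nhds ht)
  · intro p hp
    have : S ∈ nhds p := Filter.mem_of_superset ((isOpen_Ioo.prod isOpen_Ioo).mem_nhds hp)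
      (Set.prod_mono le_rfl Set.Ioo_subset_Icc_self)
    simp only [fderivWithin_of_mem_nhds this, and_self]

/-- symmetry of mixed partials at an interior point -/
lemma mixed_symm (G Gx Gt : ℝ × ℝ → ℝ) (O : Set (ℝ × ℝ)) (hO : IsOpen O)
    (hG : ContDiffOn ℝ (⊤ : ℕ∞) G O)
    (h : ∀ p ∈ O, Gx p = fderiv ℝ G p (0, 1) ∧ Gt p = fderiv ℝ G p (1, 0))
    (p : ℝ × ℝ) (hp : p ∈ O) : fderiv ℝ Gx p (1, 0) = fderiv ℝ Gt p (0, 1) := by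
  have hc : ContDiffAt ℝ (⊤ : ℕ∞) G p := hG.contDiffAt (hO.mem_nhds hp)
  have hs : IsSymmSndFDerivAt ℝ G p := hc.isSymmSndFDerivAt (by simp only [minSmoothness_of_isRCLikeNormedField]; exact WithTop.coe_le_coe.2 (le_top (a := (2 : ℕ∞))))
  have hdd : DifferentiableAt ℝ (fderiv ℝ G) p :=
    (hc.fderiv_right (m := 1) (by norm_cast)).differentiableAt (by simp)
  have e1 : Gx =ᶠ[nhds p] fun q => fderiv ℝ G q (0, 1) := by
    filter_upwards [hO.mem_nhds hp] with q hq using (h q hq).1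
  have e2 : Gt =ᶠ[nhds p] fun q => fderiv ℝ G q (1, 0) := by
    filter_upwards [hO.mem_nhds hp] with q hq using (h q hq).2
  rw [e1.fderiv_eq, e2.fderiv_eq, fderiv_clm_apply hdd (by fun_prop),
    fderiv_clm_apply hdd (by fun_prop)]
  simpa using hs (1, 0) (0, 1)

lemma quot_ext (L : ℝ) (hL : 0 < L) (f f' : ℝ → ℝ) (h0 : f 0 = 0)
    (hf : ∀ x ∈ Set.Icc 0 L, HasDerivWithinAt f (f' x) (Set.Icc 0 L) x) :
    ∃ U : ℝ → ℝ, ContinuousOn U (Set.Icc 0 L) ∧ ∀ x, f x = x * U x := by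
  refine ⟨Function.update (fun x => f x / x) 0 (f' 0), ?_, ?_⟩
  · rw [continuousOn_update_iff]
    constructor
    · intro x hx
      have h1 : ContinuousWithinAt f (Set.Icc 0 L) x := (hf x hx.1).continuousWithinAt
      exact (h1.mono Set.sdiff_subset).div continuousWithinAt_id hx.2
    · intro h
      have := hasDerivWithinAt_iff_tendsto_slope.1 (hf 0 h)
      refine this.congr ?_
      intro x
      simp [slope_def_field, h0]
  · intro x
    by_cases hx : x = 0
    · simp [hx, h0]
    · simp [hx]; field_simp

lemma lin_bound (L C : ℝ) (f f' : ℝ → ℝ) (h0 : f 0 = 0)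
    (hf : ∀ x ∈ Set.Icc 0 L, HasDerivWithinAt f (f' x) (Set.Icc 0 L) x)
    (hC : ∀ x ∈ Set.Icc 0 L, |f' x| ≤ C) (x : ℝ) (hx : x ∈ Set.Icc 0 L) : |f x| ≤ C * x := by
  have := Convex.norm_image_sub_le_of_norm_hasDerivWithin_le (s := Set.Icc 0 L) hf hC
    (convex_Icc 0 L) (x := 0) (y := x) ⟨le_rfl, hx.1.trans hx.2⟩ hx
  simpa [h0, abs_of_nonneg hx.1] using this

lemma cont_aux1 (s : Set ℝ) (k θ c : ℝ) (a gx gt gxx U V : ℝ → ℝ) (h1 : ContinuousOn a s)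
    (h2 : ContinuousOn gx s) (h3 : ContinuousOn gt s) (h4 : ContinuousOn gxx s)
    (h5 : ContinuousOn U s) (h6 : ContinuousOn V s) :
    ContinuousOn (fun x => (-gxx x + k * a x) * (gt x + 2 * θ * x * gx x + θ * a x)
        + c * U x * (V x + 2 * θ * gx x + θ * U x)) s := by
  fun_prop

lemma cont_aux2 (s : Set ℝ) (k θ c : ℝ) (a gx gt U : ℝ → ℝ) (h1 : ContinuousOn a s)
    (h2 : ContinuousOn gx s) (h3 : ContinuousOn gt s) (h5 : ContinuousOn U s) :
    ContinuousOn (fun x => -(gx x * gt x) - θ * (x * gx x ^ 2) - θ * (a x * gx x)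
      + k * (x * a x ^ 2) + c * (a x * U x)) s := by
  fun_prop

lemma D_deriv (c L T : ℝ) (hL : 0 < L) (θ1 θ2 : ℝ → ℝ)
    (hθ : ∀ t ∈ Set.Ioo 0 T, HasDerivAt θ1 (θ2 t) t)
    (hθ2 : ContinuousOn θ2 (Set.Ioo 0 T))
    (g gx gt gxt gtx : ℝ × ℝ → ℝ)
    (cg : ContinuousOn g (Set.Ioo 0 T ×ˢ Set.Icc 0 L))
    (cgx : ContinuousOn gx (Set.Ioo 0 T ×ˢ Set.Icc 0 L))
    (cgt : ContinuousOn gt (Set.Ioo 0 T ×ˢ Set.Icc 0 L))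
    (cgxt : ContinuousOn gxt (Set.Ioo 0 T ×ˢ Set.Icc 0 L))
    (cgtx : ContinuousOn gtx (Set.Ioo 0 T ×ˢ Set.Icc 0 L))
    (dgx : ∀ t ∈ Set.Ioo 0 T, ∀ x ∈ Set.Icc 0 L,
        HasDerivWithinAt (fun y => g (t, y)) (gx (t, x)) (Set.Icc 0 L) x)
    (dgt : ∀ t ∈ Set.Ioo 0 T, ∀ x ∈ Set.Icc 0 L,
        HasDerivAt (fun s => g (s, x)) (gt (t, x)) t)
    (dgtx : ∀ t ∈ Set.Ioo 0 T, ∀ x ∈ Set.Icc 0 L,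
        HasDerivWithinAt (fun y => gt (t, y)) (gtx (t, x)) (Set.Icc 0 L) x)
    (dgxt : ∀ t ∈ Set.Ioo 0 T, ∀ x ∈ Set.Icc 0 L,
        HasDerivAt (fun s => gx (s, x)) (gxt (t, x)) t)
    (g0 : ∀ t ∈ Set.Ioo 0 T, g (t, 0) = 0) (gt0 : ∀ t ∈ Set.Ioo 0 T, gt (t, 0) = 0)
    (t : ℝ) (ht : t ∈ Set.Ioo 0 T) :
    IntervalIntegrable (fun x => gx (t, x) ^ 2 + L ^ 2 / 2 * θ1 t * g (t, x) ^ 2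
      + c / x ^ 2 * g (t, x) ^ 2) volume 0 L ∧
    IntervalIntegrable (fun x => 2 * gx (t, x) * gxt (t, x)
      + (L ^ 2 / 2 * θ2 t * g (t, x) ^ 2 + L ^ 2 / 2 * θ1 t * (2 * g (t, x) * gt (t, x)))
      + c / x ^ 2 * (2 * g (t, x) * gt (t, x))) volume 0 L ∧
    HasDerivAt (fun t => ∫ x in (0:ℝ)..L, (gx (t, x) ^ 2 + L ^ 2 / 2 * θ1 t * g (t, x) ^ 2
      + c / x ^ 2 * g (t, x) ^ 2))
      (∫ x in (0:ℝ)..L, (2 * gx (t, x) * gxt (t, x)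
      + (L ^ 2 / 2 * θ2 t * g (t, x) ^ 2 + L ^ 2 / 2 * θ1 t * (2 * g (t, x) * gt (t, x)))
      + c / x ^ 2 * (2 * g (t, x) * gt (t, x)))) t := by
  obtain ⟨ε, hε, hball⟩ : ∃ ε > 0, Metric.closedBall t ε ⊆ Set.Ioo 0 T :=
    Metric.nhds_basis_closedBall.mem_iff.1 (isOpen_Ioo.mem_nhds ht)
  have sl : ∀ (f : ℝ × ℝ → ℝ), ContinuousOn f (Set.Ioo 0 T ×ˢ Set.Icc 0 L) →
      ∀ s ∈ Set.Ioo 0 T, ContinuousOn (fun x => f (s, x)) (Set.Icc 0 L) := fun f hf s hs =>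
    hf.comp (by fun_prop) (fun x hx => ⟨hs, hx⟩)
  have bd : ∀ (f : ℝ × ℝ → ℝ), ContinuousOn f (Set.Ioo 0 T ×ˢ Set.Icc 0 L) →
      ∃ C, 0 ≤ C ∧ ∀ s ∈ Metric.ball t ε, ∀ x ∈ Set.Icc 0 L, |f (s, x)| ≤ C := by
    intro f hf
    obtain ⟨C, hC⟩ := ((isCompact_closedBall t ε).prod (isCompact_Icc (a := 0) (b := L))).exists_bound_of_continuousOn
      (hf.mono (Set.prod_mono hball le_rfl))
    have hC' : ∀ s ∈ Metric.ball t ε, ∀ x ∈ Set.Icc 0 L, |f (s, x)| ≤ C := fun s hs x hx =>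
      hC (s, x) ⟨Metric.ball_subset_closedBall hs, hx⟩
    exact ⟨C, (abs_nonneg _).trans (hC' t (Metric.mem_ball_self hε) 0 ⟨le_rfl, hL.le⟩), hC'⟩
  have hbs : Metric.ball t ε ⊆ Set.Ioo 0 T := Metric.ball_subset_closedBall.trans hball
  obtain ⟨A, hA0, hA⟩ := bd g cg
  obtain ⟨B, hB0, hB⟩ := bd gx cgx
  obtain ⟨E, hE0, hE⟩ := bd gt cgt
  obtain ⟨M, hM0, hM⟩ := bd gxt cgxt
  obtain ⟨N, hN0, hN⟩ := bd gtx cgtx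
  have cθ1 : ContinuousOn θ1 (Set.Ioo 0 T) := fun s hs => (hθ s hs).continuousAt.continuousWithinAt
  obtain ⟨K1, hK10, hK1⟩ := bd (fun p => θ1 p.1) (cθ1.comp (by fun_prop) (fun p hp => hp.1))
  obtain ⟨K2, hK20, hK2⟩ := bd (fun p => θ2 p.1) (hθ2.comp (by fun_prop) (fun p hp => hp.1))
  have meas : ∀ s ∈ Set.Ioo 0 T, AEStronglyMeasurable
      (fun x => gx (s, x) ^ 2 + L ^ 2 / 2 * θ1 s * g (s, x) ^ 2
      + c / x ^ 2 * g (s, x) ^ 2) (volume.restrict (Set.uIoc 0 L)) := by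
    intro s hs
    rw [Set.uIoc_of_le hL.le]
    refine ContinuousOn.aestronglyMeasurable ?_ measurableSet_Ioc
    have h1 := (sl g cg s hs).mono Set.Ioc_subset_Icc_self
    have h2 := (sl gx cgx s hs).mono Set.Ioc_subset_Icc_self
    have h3 : ContinuousOn (fun x : ℝ => c / x ^ 2) (Set.Ioc 0 L) :=
      continuousOn_const.div (by fun_prop) (fun x hx => pow_ne_zero 2 hx.1.ne')
    exact ((h2.pow 2).add (continuousOn_const.mul (h1.pow 2))).add (h3.mul (h1.pow 2))
  have meas' : AEStronglyMeasurable (fun x => 2 * gx (t, x) * gxt (t, x)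
      + (L ^ 2 / 2 * θ2 t * g (t, x) ^ 2 + L ^ 2 / 2 * θ1 t * (2 * g (t, x) * gt (t, x)))
      + c / x ^ 2 * (2 * g (t, x) * gt (t, x))) (volume.restrict (Set.uIoc 0 L)) := by
    rw [Set.uIoc_of_le hL.le]
    refine ContinuousOn.aestronglyMeasurable ?_ measurableSet_Ioc
    have h1 := (sl g cg t ht).mono Set.Ioc_subset_Icc_self
    have h2 := (sl gx cgx t ht).mono Set.Ioc_subset_Icc_self
    have h4 := (sl gt cgt t ht).mono Set.Ioc_subset_Icc_self
    have h5 := (sl gxt cgxt t ht).mono Set.Ioc_subset_Icc_self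
    have h3 : ContinuousOn (fun x : ℝ => c / x ^ 2) (Set.Ioc 0 L) :=
      continuousOn_const.div (by fun_prop) (fun x hx => pow_ne_zero 2 hx.1.ne')
    exact (((continuousOn_const.mul h2).mul h5).add ((continuousOn_const.mul (h1.pow 2)).add
      (continuousOn_const.mul ((continuousOn_const.mul h1).mul h4)))).add
      (h3.mul ((continuousOn_const.mul h1).mul h4))
  have tm : t ∈ Metric.ball t ε := Metric.mem_ball_self hε
  have int0 : IntervalIntegrable (fun x => gx (t, x) ^ 2 + L ^ 2 / 2 * θ1 t * g (t, x) ^ 2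
      + c / x ^ 2 * g (t, x) ^ 2) volume 0 L := by
    obtain ⟨U, hU, hgU⟩ := quot_ext L hL (fun x => g (t, x)) _ (g0 t ht) (dgx t ht)
    have h1 := sl g cg t ht
    have h2 := sl gx cgx t ht
    have : IntervalIntegrable (fun x => gx (t, x) ^ 2 + L ^ 2 / 2 * θ1 t * g (t, x) ^ 2
      + c * U x ^ 2) volume 0 L := by
      apply ContinuousOn.intervalIntegrable
      rw [Set.uIcc_of_le hL.le]
      exact ((h2.pow 2).add (continuousOn_const.mul (h1.pow 2))).add
        (continuousOn_const.mul (hU.pow 2))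
    refine this.congr ?_
    intro x hx
    rw [Set.uIoc_of_le hL.le] at hx
    have hx0 : x ≠ 0 := hx.1.ne'
    simp only [hgU x]
    field_simp
  refine ⟨int0, ?_⟩
  refine intervalIntegral.hasDerivAt_integral_of_dominated_loc_of_deriv_le
    (bound := fun _ => 2 * B * M + (L ^ 2 / 2 * K2 * A ^ 2 + L ^ 2 / 2 * K1 * (2 * A * E))
      + |c| * (2 * B * N))
    (F := fun t x => gx (t, x) ^ 2 + L ^ 2 / 2 * θ1 t * g (t, x) ^ 2
      + c / x ^ 2 * g (t, x) ^ 2)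
    (F' := fun t x => 2 * gx (t, x) * gxt (t, x)
      + (L ^ 2 / 2 * θ2 t * g (t, x) ^ 2 + L ^ 2 / 2 * θ1 t * (2 * g (t, x) * gt (t, x)))
      + c / x ^ 2 * (2 * g (t, x) * gt (t, x)))
    (Metric.ball_mem_nhds t hε) ?_ int0 meas' ?_ (by simp) ?_
  · filter_upwards [isOpen_Ioo.mem_nhds ht] with s hs using meas s hs
  · refine Filter.Eventually.of_forall ?_
    intro x hx s hs
    rw [Set.uIoc_of_le hL.le] at hx
    have hx' := Set.Ioc_subset_Icc_self hx
    have b1 : |g (s, x)| ≤ B * x := lin_bound L B (fun x => g (s, x)) _ (g0 s (hbs hs))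
      (dgx s (hbs hs)) (hB s hs) x hx'
    have b2 : |gt (s, x)| ≤ N * x := lin_bound L N (fun x => gt (s, x)) _ (gt0 s (hbs hs))
      (dgtx s (hbs hs)) (hN s hs) x hx'
    have b3 : |c / x ^ 2 * (2 * g (s, x) * gt (s, x))| ≤ |c| * (2 * B * N) := by
      have hx0 : 0 < x := hx.1
      have e : |c / x ^ 2 * (2 * g (s, x) * gt (s, x))|
          = |c| / x ^ 2 * (2 * |g (s, x)| * |gt (s, x)|) := by
        simp [abs_mul, abs_div]
      rw [e]
      calc _ ≤ |c| / x ^ 2 * (2 * (B * x) * (N * x)) := by gcongr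
        _ = _ := by field_simp
    rw [Real.norm_eq_abs]
    refine (abs_add_le _ _).trans (add_le_add ((abs_add_le _ _).trans (add_le_add ?_
      ((abs_add_le _ _).trans (add_le_add ?_ ?_)))) b3)
    · rw [abs_mul, abs_mul, abs_two]
      gcongr
      · exact hB s hs x hx'
      · exact hM s hs x hx'
    · rw [abs_mul, abs_mul, abs_of_nonneg (by positivity : 0 ≤ L ^ 2 / 2), abs_pow]
      gcongr
      · exact hK2 s hs x hx'
      · exact hA s hs x hx'
    · rw [abs_mul, abs_mul, abs_of_nonneg (by positivity : 0 ≤ L ^ 2 / 2), abs_mul, abs_mul,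
        abs_two]
      gcongr
      · exact hK1 s hs x hx'
      · exact hA s hs x hx'
      · exact hE s hs x hx'
  · refine Filter.Eventually.of_forall ?_
    intro x hx s hs
    rw [Set.uIoc_of_le hL.le] at hx
    have hx' := Set.Ioc_subset_Icc_self hx
    have hs' := hbs hs
    have d1 := dgt s hs' x hx'
    have d2 := dgxt s hs' x hx'
    have d3 := hθ s hs'
    refine (((d2.pow 2).add ((d3.const_mul (L ^ 2 / 2)).mul (d1.pow 2))).add
      ((d1.pow 2).const_mul (c / x ^ 2))).congr_deriv ?_
    simp
    try ring

/-- For `g` smooth on `(0,T) × [0,L]` vanishing at `x = 0` and `x = L`, the function `D`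
is differentiable on `(0,T)` and the cross product of `P₁g` and `P₂g` satisfies
`∫₀^L P₁g · P₂g dx = (1/2) D'(t) + 2θ(t) D(t) − θ(t) L (∂_x g(t,L))²`. -/
theorem carleman_cross_product_identity (ν L T ξ : ℝ) (hν : 0 < ν) (hL : 0 < L) (hT : 0 < T)
    (hξ : 0 < ξ) (g : ℝ → ℝ → ℝ)
    (hg : ContDiffOn ℝ (⊤ : ℕ∞) (fun p : ℝ × ℝ => g p.1 p.2) (Set.Ioo 0 T ×ˢ Set.Icc 0 L))
    (hg0 : ∀ t ∈ Set.Ioo (0 : ℝ) T, g t 0 = 0)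
    (hgL : ∀ t ∈ Set.Ioo (0 : ℝ) T, g t L = 0) :
    (∀ t ∈ Set.Ioo (0 : ℝ) T, DifferentiableAt ℝ (Dfun ν L ξ g) t) ∧
    (∀ t ∈ Set.Ioo (0 : ℝ) T,
      ∫ x in (0 : ℝ)..L, P1 ν L ξ g t x * P2 L ξ g t x
        = 1 / 2 * deriv (Dfun ν L ξ g) t + 2 * theta ξ t * Dfun ν L ξ g t
          - theta ξ t * L * (derivWithin (fun y => g t y) (Set.Icc 0 L) L) ^ 2) := by
  obtain ⟨gx, gt, sgx, sgt, dgx, dgt, hint⟩ := partials L T hL _ hg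
  obtain ⟨gxx, gxt, sgxx, sgxt, dgxx, dgxt, hint1⟩ := partials L T hL _ sgx
  obtain ⟨gtx, gtt, sgtx, sgtt, dgtx, dgtt, hint2⟩ := partials L T hL _ sgt
  have hU := uniqueDiffOn_Icc hL
  have hsymm : ∀ p ∈ Set.Ioo 0 T ×ˢ Set.Ioo 0 L, gxt p = gtx p := by
    intro p hp
    rw [(hint1 p hp).2, (hint2 p hp).1]
    exact mixed_symm _ gx gt _ (isOpen_Ioo.prod isOpen_Ioo)
      (hg.mono (Set.prod_mono le_rfl Set.Ioo_subset_Icc_self)) hint p hp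
  have vanish : ∀ a ∈ Set.Icc 0 L, (∀ t ∈ Set.Ioo (0 : ℝ) T, g t a = 0) →
      ∀ t ∈ Set.Ioo (0 : ℝ) T, gt (t, a) = 0 := by
    intro a ha h t ht
    refine (dgt t ht a ha).unique ((hasDerivAt_const t (0:ℝ)).congr_of_eventuallyEq ?_)
    filter_upwards [isOpen_Ioo.mem_nhds ht] with s hs using h s hs
  have z0 : (0:ℝ) ∈ Set.Icc 0 L := ⟨le_rfl, hL.le⟩
  have zL : L ∈ Set.Icc 0 L := ⟨hL.le, le_rfl⟩
  have gt0 := vanish 0 z0 hg0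
  have gtL := vanish L zL hgL
  have ex : ∀ t ∈ Set.Ioo 0 T, ∀ x ∈ Set.Icc 0 L,
      derivWithin (fun y => g t y) (Set.Icc 0 L) x = gx (t, x) := fun t ht x hx =>
    (dgx t ht x hx).derivWithin (hU x hx)
  have exx : ∀ t ∈ Set.Ioo 0 T, ∀ x ∈ Set.Icc 0 L,
      derivWithin (derivWithin (fun y => g t y) (Set.Icc 0 L)) (Set.Icc 0 L) x = gxx (t, x) := by
    intro t ht x hx
    rw [derivWithin_congr (fun y hy => ex t ht y hy) (ex t ht x hx)]
    exact (dgxx t ht x hx).derivWithin (hU x hx)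
  have et : ∀ t ∈ Set.Ioo 0 T, ∀ x ∈ Set.Icc 0 L,
      deriv (fun s => g s x) t = gt (t, x) := fun t ht x hx => (dgt t ht x hx).deriv
  have key := D_deriv (ν ^ 2 - 1 / 4) L T hL (deriv (theta ξ))
    (fun t => -4 * theta ξ t * deriv (theta ξ) t)
    (fun t ht => theta_deriv ξ t hξ ht.1)
    (fun t ht => by
      have h1 := (theta_hasDerivAt ξ t hξ ht.1).continuousAt
      have h2 := (theta_deriv ξ t hξ ht.1).continuousAt
      exact ((continuousAt_const.mul h1).mul h2).continuousWithinAt)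
    (fun p => g p.1 p.2) gx gt gxt gtx hg.continuousOn sgx.continuousOn sgt.continuousOn
    sgxt.continuousOn sgtx.continuousOn dgx dgt dgtx dgxt hg0 gt0
  have eD : ∀ t ∈ Set.Ioo 0 T, Dfun ν L ξ g t = ∫ x in (0:ℝ)..L, (gx (t, x) ^ 2
      + L ^ 2 / 2 * deriv (theta ξ) t * g t x ^ 2 + (ν ^ 2 - 1 / 4) / x ^ 2 * g t x ^ 2) := by
    intro t ht
    unfold Dfun
    refine intervalIntegral.integral_congr ?_
    intro x hx
    rw [Set.uIcc_of_le hL.le] at hx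
    simp only [ex t ht x hx]
  have hD : ∀ t ∈ Set.Ioo 0 T, HasDerivAt (Dfun ν L ξ g) _ t := fun t ht =>
    (key t ht).2.2.congr_of_eventuallyEq (by
      filter_upwards [isOpen_Ioo.mem_nhds ht] with s hs using eD s hs)
  refine ⟨fun t ht => (hD t ht).differentiableAt, ?_⟩
  intro t ht
  obtain ⟨i1, i2, -⟩ := key t ht
  rw [(hD t ht).deriv, eD t ht, ex t ht L zL]
  set θ := theta ξ t with hθ
  set θ' := deriv (theta ξ) t with hθ'
  set c := ν ^ 2 - 1 / 4 with hc
  have sl : ∀ (f : ℝ × ℝ → ℝ), ContDiffOn ℝ (⊤ : ℕ∞) f (Set.Ioo 0 T ×ˢ Set.Icc 0 L) →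
      ContinuousOn (fun x => f (t, x)) (Set.Icc 0 L) := fun f hf =>
    hf.continuousOn.comp (by fun_prop) (fun x hx => ⟨ht, hx⟩)
  have c1 : ContinuousOn (fun x => g t x) (Set.Icc 0 L) := sl _ hg
  have c2 := sl _ sgx
  have c3 := sl _ sgt
  have c4 := sl _ sgxx
  obtain ⟨U, hUc, hgU⟩ := quot_ext L hL (fun x => g t x) _ (hg0 t ht) (dgx t ht)
  obtain ⟨V, hVc, hgV⟩ := quot_ext L hL (fun x => gt (t, x)) _ (gt0 t ht) (dgtx t ht)
  have eP : ∫ x in (0 : ℝ)..L, P1 ν L ξ g t x * P2 L ξ g t x = ∫ x in (0 : ℝ)..L,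
      (-gxx (t, x) + L ^ 2 / 2 * θ' * g t x + c / x ^ 2 * g t x) *
        (gt (t, x) + 2 * θ * x * gx (t, x) + θ * g t x) := by
    refine intervalIntegral.integral_congr ?_
    intro x hx
    rw [Set.uIcc_of_le hL.le] at hx
    simp only [P1, P2, ex t ht x hx, exx t ht x hx, et t ht x hx, ← hθ, ← hθ', ← hc]
  have i3 : IntervalIntegrable (fun x =>
      (-gxx (t, x) + L ^ 2 / 2 * θ' * g t x + c / x ^ 2 * g t x) *
        (gt (t, x) + 2 * θ * x * gx (t, x) + θ * g t x)) volume 0 L := by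
    have : IntervalIntegrable (fun x =>
      (-gxx (t, x) + L ^ 2 / 2 * θ' * g t x) *
        (gt (t, x) + 2 * θ * x * gx (t, x) + θ * g t x)
        + c * U x * (V x + 2 * θ * gx (t, x) + θ * U x)) volume 0 L := by
      apply ContinuousOn.intervalIntegrable
      rw [Set.uIcc_of_le hL.le]
      exact cont_aux1 _ _ _ _ _ _ _ _ _ _ c1 c2 c3 c4 hUc hVc
    refine this.congr ?_
    intro x hx
    rw [Set.uIoc_of_le hL.le] at hx
    have hx0 : x ≠ 0 := hx.1.ne'
    simp only [hgU x, hgV x]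
    field_simp
  rw [eP]
  have ftc := intervalIntegral.integral_eq_sub_of_hasDerivAt_of_le hL.le
    (f := fun x => -(gx (t, x) * gt (t, x)) - θ * (x * gx (t, x) ^ 2) - θ * (g t x * gx (t, x))
      + L ^ 2 / 2 * θ' * θ * (x * g t x ^ 2) + c * θ * (g t x ^ 2 / x))
    (f' := fun x => (-gxx (t, x) + L ^ 2 / 2 * θ' * g t x + c / x ^ 2 * g t x) *
        (gt (t, x) + 2 * θ * x * gx (t, x) + θ * g t x)
        - 1 / 2 * (2 * gx (t, x) * gxt (t, x)
      + (L ^ 2 / 2 * (-4 * θ * θ') * g t x ^ 2 + L ^ 2 / 2 * θ' * (2 * g t x * gt (t, x)))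
      + c / x ^ 2 * (2 * g t x * gt (t, x)))
        - 2 * θ * (gx (t, x) ^ 2
      + L ^ 2 / 2 * θ' * g t x ^ 2 + c / x ^ 2 * g t x ^ 2)) ?_ ?_
      ((i3.sub (i2.const_mul _)).sub (i1.const_mul _))
  · rw [intervalIntegral.integral_sub (i3.sub (i2.const_mul _)) (i1.const_mul _),
      intervalIntegral.integral_sub i3 (i2.const_mul _), intervalIntegral.integral_const_mul,
      intervalIntegral.integral_const_mul] at ftc
    simp only [hg0 t ht, hgL t ht, gt0 t ht, gtL t ht] at ftc
    simp only [mul_zero, zero_mul, ne_eq, OfNat.ofNat_ne_zero, not_false_eq_true, zero_pow,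
      zero_div, add_zero, sub_zero, neg_zero, zero_sub] at ftc
    linarith
  · have : ContinuousOn (fun x => -(gx (t, x) * gt (t, x)) - θ * (x * gx (t, x) ^ 2)
      - θ * (g t x * gx (t, x))
      + L ^ 2 / 2 * θ' * θ * (x * g t x ^ 2) + c * θ * (g t x * U x)) (Set.Icc 0 L) := by
      exact cont_aux2 _ _ _ _ _ _ _ _ c1 c2 c3 hUc
    refine this.congr ?_
    intro x hx
    by_cases hx0 : x = 0
    · simp [hx0, hg0 t ht]
    · have : g t x ^ 2 / x = g t x * U x := by rw [hgU x]; field_simp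
      simp only [this]
  · intro x hx
    have hx0 : x ≠ 0 := hx.1.ne'
    have hx' := Set.Ioo_subset_Icc_self hx
    have hn : Set.Icc 0 L ∈ nhds x := Icc_mem_nhds hx.1 hx.2
    have d1 : HasDerivAt (fun y => g t y) (gx (t, x)) x := (dgx t ht x hx').hasDerivAt hn
    have d2 := (dgxx t ht x hx').hasDerivAt hn
    have d3 := (dgtx t ht x hx').hasDerivAt hn
    have dx := hasDerivAt_id' x
    refine ((((((d2.mul d3).neg).sub ((dx.mul (d2.pow 2)).const_mul θ)).sub
      ((d1.mul d2).const_mul θ)).add ((dx.mul (d1.pow 2)).const_mul (L ^ 2 / 2 * θ' * θ))).add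
      (((d1.pow 2).div dx hx0).const_mul (c * θ))).congr_deriv ?_
    rw [hsymm (t, x) ⟨ht, hx⟩]
    simp
    field_simp
    ring
end

section
/- Let ν > 0, γ ≥ 1 and L > 0, and set μ̄ := R(1, (0,∞)). Then for every ε > 0 there exists ξ₀ > 0 such that for every ξ ≥ ξ₀, R(ξ, (0,L)) ≤ (1 + ε)(μ̄ + ε) ξ^{2/(1+γ)}, where R(ξ, I) denotes the Rayleigh infimum defined in the context. -/
open MeasureTheory Real Set

/-- Rayleigh infimum of the quadratic form of `−∂_x² + ξ²x^{2γ} + (ν²−1/4)/x²` over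
smooth compactly supported functions in `I` normalized in `L²(I)`. -/
noncomputable def rayleigh (ν γ ξ : ℝ) (I : Set ℝ) : ℝ :=
  sInf { r : ℝ | ∃ u : ℝ → ℝ, ContDiff ℝ (⊤ : ℕ∞) u ∧ HasCompactSupport u ∧ tsupport u ⊆ I ∧
    (∫ x in I, (u x) ^ 2) = 1 ∧
    r = ∫ x in I, ((deriv u x) ^ 2
          + (ξ ^ 2 * x ^ (2 * γ) + (ν ^ 2 - 1 / 4) / x ^ 2) * (u x) ^ 2) }

lemma ray_support_eq {u : ℝ → ℝ} {I : Set ℝ} (hu : tsupport u ⊆ I) {ν γ ξ : ℝ} :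
    (∫ x in I, ((deriv u x) ^ 2
          + (ξ ^ 2 * x ^ (2 * γ) + (ν ^ 2 - 1 / 4) / x ^ 2) * (u x) ^ 2)) =
    ∫ x, ((deriv u x) ^ 2
          + (ξ ^ 2 * x ^ (2 * γ) + (ν ^ 2 - 1 / 4) / x ^ 2) * (u x) ^ 2) := by
  apply setIntegral_eq_integral_of_forall_compl_eq_zero
  intro x hx
  have h1 : u x = 0 := image_eq_zero_of_notMem_tsupport (fun h => hx (hu h))
  have h2 : deriv u x = 0 := by
    by_contra h
    exact hx (hu (support_deriv_subset (f := u) h))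
  simp [h1, h2]

lemma ray_support_eq_sq {u : ℝ → ℝ} {I : Set ℝ} (hu : tsupport u ⊆ I) :
    (∫ x in I, (u x) ^ 2) = ∫ x, (u x) ^ 2 := by
  apply setIntegral_eq_integral_of_forall_compl_eq_zero
  intro x hx
  have h1 : u x = 0 := image_eq_zero_of_notMem_tsupport (fun h => hx (hu h))
  simp [h1]

lemma ray_nonneg {u : ℝ → ℝ} (hs : ContDiff ℝ (⊤ : ℕ∞) u) (hc : HasCompactSupport u)
    (hu : tsupport u ⊆ Ioi 0) {ν γ ξ : ℝ} (hγ : 1 ≤ γ) :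
    0 ≤ ∫ x, ((deriv u x) ^ 2
          + (ξ ^ 2 * x ^ (2 * γ) + (ν ^ 2 - 1 / 4) / x ^ 2) * (u x) ^ 2) := by
  have hu0 : ∀ x, x ≤ 0 → u x = 0 := fun x hx =>
    image_eq_zero_of_notMem_tsupport (fun h => absurd (hu h) (by simpa using hx))
  set g : ℝ → ℝ := fun x => u x * (u x * (2 * x)⁻¹) with hg
  have hgc : HasCompactSupport g := hc.mul_right
  have hgs : ContDiff ℝ 1 g := by
    rw [← contMDiff_iff_contDiff]
    apply contMDiff_of_tsupport
    intro x hx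
    rw [contMDiffAt_iff_contDiffAt]
    have hx0 : 0 < x := hu (tsupport_mul_subset_left hx)
    have hus : ContDiffAt ℝ 1 u x := (hs.of_le (by simp)).contDiffAt
    exact hus.mul (hus.mul ((contDiffAt_const.mul contDiffAt_id).inv (by simp; exact hx0.ne')))
  have hgd : ∀ x, HasDerivAt g (deriv g x) x := fun x =>
    (hgs.differentiable (by simp) x).hasDerivAt
  have hdc : Continuous (deriv g) := hgs.continuous_deriv (by simp)
  have hint : ∫ x, deriv g x = 0 :=
    integral_eq_zero_of_hasDerivAt_of_integrable hgd
      (hdc.integrable_of_hasCompactSupport hgc.deriv)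
      (hgs.continuous.integrable_of_hasCompactSupport hgc)
  have hdu : Continuous (deriv u) := hs.continuous_deriv (by simp)
  have hcont : Continuous (fun x => (deriv u x) ^ 2
          + (ξ ^ 2 * x ^ (2 * γ) + (ν ^ 2 - 1 / 4) / x ^ 2) * (u x) ^ 2) := by
    refine (hdu.pow 2).add ?_
    rw [continuous_iff_continuousAt]
    apply continuous_iff_continuousAt.1
    apply continuous_of_tsupport
    intro x hx
    have hx' : x ∈ tsupport u := by
      have := tsupport_mul_subset_right hx
      refine closure_mono ?_ this
      intro y hy h
      simp [h] at hy
    have hx0 : x ≠ 0 := ne_of_gt (hu hx')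
    have := hs.continuous.continuousAt (x := x)
    refine ContinuousAt.mul ?_ (this.pow 2)
    refine ContinuousAt.add (continuousAt_const.mul ?_) ?_
    · exact Real.continuousAt_rpow_const _ _ (Or.inl hx0)
    · exact continuousAt_const.div (continuousAt_id.pow 2) (by simpa using hx0)
  have hcs : HasCompactSupport (fun x => (deriv u x) ^ 2
          + (ξ ^ 2 * x ^ (2 * γ) + (ν ^ 2 - 1 / 4) / x ^ 2) * (u x) ^ 2) := by
    apply HasCompactSupport.intro hc
    intro x hx
    have h1 : u x = 0 := image_eq_zero_of_notMem_tsupport hx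
    have h2 : deriv u x = 0 := by
      by_contra h
      exact hx (support_deriv_subset (f := u) h)
    simp [h1, h2]
  rw [← hint]
  apply integral_mono (hdc.integrable_of_hasCompactSupport hgc.deriv)
    (hcont.integrable_of_hasCompactSupport hcs)
  intro x
  by_cases hx : 0 < x
  · have hud : HasDerivAt u (deriv u x) x := (hs.differentiable (by simp) x).hasDerivAt
    have h1 : HasDerivAt (fun x : ℝ => (2 * x)⁻¹) (-(2 * 1) / (2 * x) ^ 2) x :=
      ((hasDerivAt_id x).const_mul 2).inv (by simpa using hx.ne')
    have h2 := (hud.mul (hud.mul h1)).deriv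
    have h3 : deriv g x = deriv u x * (u x * (2 * x)⁻¹) +
      u x * (deriv u x * (2 * x)⁻¹ + u x * (-(2 * 1) / (2 * x) ^ 2)) := h2
    have hp : 0 ≤ x ^ (2 * γ) := Real.rpow_nonneg hx.le _
    have h4 : (deriv u x) ^ 2
          + (ξ ^ 2 * x ^ (2 * γ) + (ν ^ 2 - 1 / 4) / x ^ 2) * (u x) ^ 2 - deriv g x
        = (deriv u x - u x / (2 * x)) ^ 2 + (ξ ^ 2 * x ^ (2 * γ) + ν ^ 2 / x ^ 2) * (u x) ^ 2 := by
      rw [h3]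
      field_simp
      ring
    have h5 : 0 ≤ (deriv u x - u x / (2 * x)) ^ 2
      + (ξ ^ 2 * x ^ (2 * γ) + ν ^ 2 / x ^ 2) * (u x) ^ 2 := by positivity
    show deriv g x ≤ _
    simp only
    linarith
  · have h1 : deriv g x = 0 := by
      by_contra h
      have := tsupport_mul_subset_left (support_deriv_subset (f := g) h)
      exact hx (hu this)
    show deriv g x ≤ _
    simp only
    rw [h1, hu0 x (not_lt.1 hx)]
    simp [sq_nonneg]

lemma ray_exists : ∃ u : ℝ → ℝ, ContDiff ℝ (⊤ : ℕ∞) u ∧ HasCompactSupport u ∧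
    tsupport u ⊆ Ioi 0 ∧ (∫ x in Ioi 0, (u x) ^ 2) = 1 := by
  let f : ContDiffBump (2 : ℝ) := ⟨1 / 2, 1, by norm_num, by norm_num⟩
  have hpos : 0 < ∫ x, (f x) ^ 2 := by
    apply Continuous.integral_pos_of_hasCompactSupport_nonneg_nonzero (x := 2)
    · exact f.continuous.pow 2
    · have : HasCompactSupport (fun x => f x * f x) := f.hasCompactSupport.mul_right
      simpa [sq] using this
    · intro x; positivity
    · have : f 2 = 1 := f.one_of_mem_closedBall (by simp [f])
      simp [this]
  set A := ∫ x, (f x) ^ 2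
  have hts : tsupport (fun x => (√A)⁻¹ * f x) ⊆ Ioi 0 := by
    refine tsupport_mul_subset_right.trans ?_
    change tsupport f ⊆ _
    rw [f.tsupport_eq]
    intro x hx
    simp [f, Real.dist_eq, abs_le] at hx
    simp; linarith
  refine ⟨fun x => (√A)⁻¹ * f x, contDiff_const.mul f.contDiff, f.hasCompactSupport.mul_left,
    hts, ?_⟩
  rw [ray_support_eq_sq hts]
  simp_rw [mul_pow]
  rw [integral_const_mul, inv_pow, Real.sq_sqrt hpos.le]
  exact inv_mul_cancel₀ hpos.ne'

/-- Upper bound on the first eigenvalue: with `μ̄ = R(1,(0,∞))`, for every `ε > 0` there is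
`ξ₀ > 0` such that for every `ξ ≥ ξ₀`, `R(ξ,(0,L)) ≤ (1+ε)(μ̄+ε) ξ^{2/(1+γ)}`. -/
theorem rayleigh_upper_bound (ν γ L : ℝ) (hν : 0 < ν) (hγ : 1 ≤ γ) (hL : 0 < L) :
    ∀ ε > (0 : ℝ), ∃ ξ₀ > (0 : ℝ), ∀ ξ ≥ ξ₀,
      rayleigh ν γ ξ (Set.Ioo 0 L)
        ≤ (1 + ε) * (rayleigh ν γ 1 (Set.Ioi 0) + ε) * ξ ^ ((2 : ℝ) / (1 + γ)) := by
  intro ε hε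
  have hnn : 0 ≤ rayleigh ν γ 1 (Set.Ioi 0) := by
    apply Real.sInf_nonneg
    rintro r ⟨u, hs, hc, hu, -, rfl⟩
    rw [ray_support_eq hu]
    exact ray_nonneg hs hc hu hγ
  obtain ⟨r, ⟨u, hs, hc, hu, hn, hr⟩, hlt⟩ :
      ∃ r ∈ { r : ℝ | ∃ u : ℝ → ℝ, ContDiff ℝ (⊤ : ℕ∞) u ∧ HasCompactSupport u ∧
        tsupport u ⊆ Ioi 0 ∧ (∫ x in Ioi 0, (u x) ^ 2) = 1 ∧
        r = ∫ x in Ioi 0, ((deriv u x) ^ 2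
          + ((1 : ℝ) ^ 2 * x ^ (2 * γ) + (ν ^ 2 - 1 / 4) / x ^ 2) * (u x) ^ 2) },
        r < rayleigh ν γ 1 (Set.Ioi 0) + ε := by
    apply Real.lt_sInf_add_pos _ hε
    obtain ⟨u, h1, h2, h3, h4⟩ := ray_exists
    exact ⟨_, u, h1, h2, h3, h4, rfl⟩
  rw [ray_support_eq hu] at hr
  rw [ray_support_eq_sq hu] at hn
  obtain ⟨M, hM0, hM⟩ : ∃ M : ℝ, 0 < M ∧ ∀ x ∈ tsupport u, x ≤ M := by
    obtain ⟨M, hM⟩ := hc.isCompact.bddAbove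
    exact ⟨max M 1, by positivity, fun x hx => (hM hx).trans (le_max_left _ _)⟩
  have hg1 : 0 < 1 + γ := by linarith
  refine ⟨(M / L + 1) ^ (1 + γ), by positivity, fun ξ hξ => ?_⟩
  have hξ0 : 0 < ξ := lt_of_lt_of_le (by positivity) hξ
  obtain ⟨l, hl⟩ : ∃ l : ℝ, l = ξ ^ (1 + γ)⁻¹ := ⟨_, rfl⟩
  have hl0 : 0 < l := hl ▸ Real.rpow_pos_of_pos hξ0 _
  have hlM : M / L + 1 ≤ l := by
    have h := Real.rpow_le_rpow (by positivity) hξ (inv_nonneg.2 hg1.le)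
    rwa [Real.rpow_rpow_inv (by positivity) hg1.ne', ← hl] at h
  have hMl : M < l * L := by
    have : M / L < l := by linarith
    rwa [div_lt_iff₀ hL] at this
  have hlξ : ξ = l ^ (1 + γ) := by
    rw [hl, Real.rpow_inv_rpow hξ0.le hg1.ne']
  have hl2 : ξ ^ ((2 : ℝ) / (1 + γ)) = l ^ 2 := by
    rw [hl, ← Real.rpow_natCast, ← Real.rpow_mul hξ0.le]
    congr 1
    push_cast
    field_simp
  set v : ℝ → ℝ := fun x => √l * u (l * x) with hv
  have hsub : tsupport v ⊆ (fun x => l * x) ⁻¹' tsupport u := by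
    apply closure_minimal
    · intro x hx
      apply subset_tsupport
      intro h
      simp [hv, h] at hx
    · exact (isClosed_tsupport u).preimage (by fun_prop)
  have hvI : tsupport v ⊆ Ioo 0 L := by
    intro x hx
    have h := hsub hx
    have h1 : 0 < l * x := hu h
    have h2 : l * x ≤ M := hM _ h
    refine ⟨pos_of_mul_pos_right h1 hl0.le, ?_⟩
    exact lt_of_mul_lt_mul_left (h2.trans_lt hMl) hl0.le
  have hvc : HasCompactSupport v :=
    isCompact_Icc.of_isClosed_subset (isClosed_tsupport v) (hvI.trans Ioo_subset_Icc_self)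
  have hvs : ContDiff ℝ (⊤ : ℕ∞) v :=
    contDiff_const.mul (hs.comp (contDiff_const.mul contDiff_id))
  have hvn : ∫ x in Ioo 0 L, (v x) ^ 2 = 1 := by
    rw [ray_support_eq_sq hvI]
    simp_rw [hv, mul_pow, Real.sq_sqrt hl0.le]
    rw [integral_const_mul, Measure.integral_comp_mul_left (fun x => u x ^ 2) l, hn,
      abs_of_pos (inv_pos.2 hl0)]
    simp [hl0.ne']
  have hdv : ∀ x, deriv v x = √l * (l * deriv u (l * x)) := by
    intro x
    have hud : HasDerivAt u (deriv u (l * x)) (l * x) :=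
      (hs.differentiable (by simp) _).hasDerivAt
    have h1 : HasDerivAt (fun x : ℝ => l * x) (l * 1) x := (hasDerivAt_id x).const_mul l
    have h2 := ((hud.comp x h1).const_mul (√l)).deriv
    have h3 : deriv v x = √l * (deriv u (l * x) * (l * 1)) := h2
    rw [h3]; ring
  have hvr : (∫ x in Ioo 0 L, ((deriv v x) ^ 2
          + (ξ ^ 2 * x ^ (2 * γ) + (ν ^ 2 - 1 / 4) / x ^ 2) * (v x) ^ 2)) = l ^ 2 * r := by
    rw [ray_support_eq hvI]
    let F : ℝ → ℝ := fun x => ((deriv u x) ^ 2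
          + ((1 : ℝ) ^ 2 * x ^ (2 * γ) + (ν ^ 2 - 1 / 4) / x ^ 2) * (u x) ^ 2)
    have hF : ∀ x, ((deriv v x) ^ 2
          + (ξ ^ 2 * x ^ (2 * γ) + (ν ^ 2 - 1 / 4) / x ^ 2) * (v x) ^ 2) = l ^ 3 * F (l * x) := by
      intro x
      rw [hdv]
      simp only [hv, F, mul_pow, Real.sq_sqrt hl0.le]
      by_cases hx : 0 < x
      · have h1 : (l * x) ^ (2 * γ) = l ^ (2 * γ) * x ^ (2 * γ) :=
          Real.mul_rpow hl0.le hx.le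
        have h2 : ξ ^ 2 = l ^ 2 * l ^ (2 * γ) := by
          rw [hlξ, ← Real.rpow_natCast, ← Real.rpow_mul hl0.le, ← Real.rpow_natCast,
            ← Real.rpow_add hl0]
          congr 1
          push_cast
          ring
        rw [h1, h2]
        field_simp
      · have : u (l * x) = 0 := image_eq_zero_of_notMem_tsupport (fun h =>
          hx (pos_of_mul_pos_right (hu h) hl0.le))
        rw [this]
        ring
    simp_rw [hF]
    rw [integral_const_mul, Measure.integral_comp_mul_left F l, ← hr,
      abs_of_pos (inv_pos.2 hl0), smul_eq_mul]
    field_simp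
  have hle : rayleigh ν γ ξ (Set.Ioo 0 L) ≤ l ^ 2 * r := by
    apply csInf_le
    · refine ⟨0, ?_⟩
      rintro r ⟨w, hs, hc, hw, -, rfl⟩
      rw [ray_support_eq hw]
      exact ray_nonneg hs hc (hw.trans Ioo_subset_Ioi_self) hγ
    · exact ⟨v, hvs, hvc, hvI, hvn, hvr.symm⟩
  rw [hl2]
  refine hle.trans ?_
  rw [mul_comm]
  apply mul_le_mul_of_nonneg_right _ (by positivity)
  nlinarith [mul_nonneg hε.le (add_nonneg hnn hε.le)]
end

section
/- Let ν > 0, L > 0, ξ > 0, λ ∈ ℝ and let q : [0,L] → ℝ be continuous. Let u ∈ C²((0,L)) ∩ C⁰([0,L]) with u(0) = u(L) = 0 satisfy −u''(x) + ξ² q(x)² u(x) + ((ν² − 1/4)/x²) u(x) = λ u(x) for every x ∈ (0,L). Let ψ ∈ C²([0,L]) and set θ := u e^{ξψ}. Assume that θ' and x ↦ θ(x)/x are square-integrable on (0,L), and that θ(x)θ'(x) → 0 as x → 0⁺ and as x → L⁻. Then ∫₀^L ( θ'(x)² + ( ξ² q(x)² + (ν² − 1/4)/x² − ξ² ψ'(x)²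 − λ ) θ(x)² ) dx = 0. -/
open MeasureTheory Real Set Filter

/-- The Agmon-conjugated function `θ = u e^{ξψ}`. -/
noncomputable def agmonTheta (ξ : ℝ) (u ψ : ℝ → ℝ) : ℝ → ℝ :=
  fun x => u x * Real.exp (ξ * ψ x)

/-- One-dimensional Agmon energy identity: if `u ∈ C²((0,L)) ∩ C⁰([0,L])` vanishes at `0, L`
and solves `−u'' + ξ²q²u + ((ν²−1/4)/x²)u = λu` on `(0,L)`, and `ψ ∈ C²([0,L])`, then for
`θ = u e^{ξψ}` (with the stated integrability and boundary decay of `θθ'`),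
`∫₀^L (θ'² + (ξ²q² + (ν²−1/4)/x² − ξ²ψ'² − λ) θ²) dx = 0`. -/
theorem agmon_energy_identity (ν L ξ lam : ℝ) (q u ψ : ℝ → ℝ)
    (hν : 0 < ν) (hL : 0 < L) (hξ : 0 < ξ)
    (hq : ContinuousOn q (Set.Icc 0 L))
    (hu_cont : ContinuousOn u (Set.Icc 0 L))
    (hu_C2 : ContDiffOn ℝ 2 u (Set.Ioo 0 L))
    (hu0 : u 0 = 0) (huL : u L = 0)
    (heq : ∀ x ∈ Set.Ioo (0 : ℝ) L,
      -deriv (deriv u) x + ξ ^ 2 * (q x) ^ 2 * u x + ((ν ^ 2 - 1 / 4) / x ^ 2) * u x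
        = lam * u x)
    (hψ : ContDiffOn ℝ 2 ψ (Set.Icc 0 L))
    (hθ'int : MeasureTheory.IntegrableOn
      (fun x => (deriv (agmonTheta ξ u ψ) x) ^ 2) (Set.Ioo 0 L))
    (hθxint : MeasureTheory.IntegrableOn
      (fun x => (agmonTheta ξ u ψ x / x) ^ 2) (Set.Ioo 0 L))
    (hlim0 : Filter.Tendsto (fun x => agmonTheta ξ u ψ x * deriv (agmonTheta ξ u ψ) x)
      (nhdsWithin 0 (Set.Ioi 0)) (nhds 0))
    (hlimL : Filter.Tendsto (fun x => agmonTheta ξ u ψ x * deriv (agmonTheta ξ u ψ) x)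
      (nhdsWithin L (Set.Iio L)) (nhds 0)) :
    ∫ x in (0 : ℝ)..L,
        ((deriv (agmonTheta ξ u ψ) x) ^ 2
          + (ξ ^ 2 * (q x) ^ 2 + (ν ^ 2 - 1 / 4) / x ^ 2 - ξ ^ 2 * (deriv ψ x) ^ 2 - lam) *
              (agmonTheta ξ u ψ x) ^ 2)
      = 0 := by
  have hs : IsOpen (Set.Ioo (0 : ℝ) L) := isOpen_Ioo
  have hnhds : ∀ x ∈ Set.Ioo (0 : ℝ) L, Set.Icc 0 L ∈ nhds x := fun x hx =>
    Icc_mem_nhds hx.1 hx.2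
  have hu1 : ∀ x ∈ Set.Ioo (0 : ℝ) L, HasDerivAt u (deriv u x) x := fun x hx =>
    ((hu_C2.differentiableOn (by norm_num)).differentiableAt (hs.mem_nhds hx)).hasDerivAt
  have hu2 : ∀ x ∈ Set.Ioo (0 : ℝ) L, HasDerivAt (deriv u) (deriv (deriv u) x) x := fun x hx =>
    (((hu_C2.deriv_of_isOpen (m := 1) hs (by norm_num)).differentiableOn
      (by norm_num)).differentiableAt (hs.mem_nhds hx)).hasDerivAt
  have hψ1 : ∀ x ∈ Set.Ioo (0 : ℝ) L, HasDerivAt ψ (deriv ψ x) x := fun x hx =>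
    ((hψ.differentiableOn (by norm_num)).differentiableAt (hnhds x hx)).hasDerivAt
  have hE : ∀ x ∈ Set.Ioo (0 : ℝ) L, HasDerivAt (fun x => Real.exp (ξ * ψ x))
      (Real.exp (ξ * ψ x) * (ξ * deriv ψ x)) x := fun x hx =>
    ((hψ1 x hx).const_mul ξ).exp
  have hθ1 : ∀ x ∈ Set.Ioo (0 : ℝ) L, deriv (agmonTheta ξ u ψ) x =
      deriv u x * Real.exp (ξ * ψ x) + u x * (Real.exp (ξ * ψ x) * (ξ * deriv ψ x)) :=
    fun x hx => ((hu1 x hx).mul (hE x hx)).deriv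
  have hdψc : ContinuousOn (derivWithin ψ (Set.Icc 0 L)) (Set.Icc 0 L) :=
    hψ.continuousOn_derivWithin (uniqueDiffOn_Icc hL) (by norm_num)
  have hdψ : ∀ x ∈ Set.Ioo (0 : ℝ) L, derivWithin ψ (Set.Icc 0 L) x = deriv ψ x := fun x hx =>
    derivWithin_of_mem_nhds (hnhds x hx)
  have hθc : ContinuousOn (agmonTheta ξ u ψ) (Set.Icc 0 L) :=
    hu_cont.mul ((continuousOn_const.mul hψ.continuousOn).rexp)
  have hθ0 : agmonTheta ξ u ψ 0 = 0 := by simp [agmonTheta, hu0]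
  have hθL : agmonTheta ξ u ψ L = 0 := by simp [agmonTheta, huL]
  have hG : ContinuousOn (fun x => ξ * derivWithin ψ (Set.Icc 0 L) x * agmonTheta ξ u ψ x ^ 2)
      (Set.Icc 0 L) := (continuousOn_const.mul hdψc).mul (hθc.pow 2)
  -- the primitive
  have hFeq : ∀ x ∈ Set.Ioo (0 : ℝ) L,
      agmonTheta ξ u ψ x * deriv (agmonTheta ξ u ψ) x
        - ξ * derivWithin ψ (Set.Icc 0 L) x * agmonTheta ξ u ψ x ^ 2
      = u x * deriv u x * (Real.exp (ξ * ψ x) * Real.exp (ξ * ψ x)) := by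
    intro x hx
    rw [hθ1 x hx, hdψ x hx]
    simp only [agmonTheta]
    ring
  have hIoo0 : Set.Ioo (0 : ℝ) L ∈ nhdsWithin 0 (Set.Ioi 0) := Ioo_mem_nhdsGT hL
  have hIooL : Set.Ioo (0 : ℝ) L ∈ nhdsWithin L (Set.Iio L) := Ioo_mem_nhdsLT hL
  have hF0 : Tendsto (fun x => u x * deriv u x * (Real.exp (ξ * ψ x) * Real.exp (ξ * ψ x)))
      (nhdsWithin 0 (Set.Ioi 0)) (nhds 0) := by
    have h1 : Tendsto (fun x => ξ * derivWithin ψ (Set.Icc 0 L) x * agmonTheta ξ u ψ x ^ 2)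
        (nhdsWithin 0 (Set.Ioi 0)) (nhds 0) := by
      have := (hG 0 (left_mem_Icc.2 hL.le)).tendsto.mono_left
        (nhdsWithin_le_of_mem (mem_of_superset hIoo0 Ioo_subset_Icc_self))
      simpa [hθ0] using this
    have h2 := hlim0.sub h1
    rw [sub_zero] at h2
    exact h2.congr' (mem_of_superset hIoo0 hFeq)
  have hFL : Tendsto (fun x => u x * deriv u x * (Real.exp (ξ * ψ x) * Real.exp (ξ * ψ x)))
      (nhdsWithin L (Set.Iio L)) (nhds 0) := by
    have h1 : Tendsto (fun x => ξ * derivWithin ψ (Set.Icc 0 L) x * agmonTheta ξ u ψ x ^ 2)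
        (nhdsWithin L (Set.Iio L)) (nhds 0) := by
      have := (hG L (right_mem_Icc.2 hL.le)).tendsto.mono_left
        (nhdsWithin_le_of_mem (mem_of_superset hIooL Ioo_subset_Icc_self))
      simpa [hθL] using this
    have h2 := hlimL.sub h1
    rw [sub_zero] at h2
    exact h2.congr' (mem_of_superset hIooL hFeq)
  have hderiv : ∀ x ∈ Set.Ioo (0 : ℝ) L,
      HasDerivAt (fun x => u x * deriv u x * (Real.exp (ξ * ψ x) * Real.exp (ξ * ψ x)))
        ((deriv (agmonTheta ξ u ψ) x) ^ 2
          + (ξ ^ 2 * (q x) ^ 2 + (ν ^ 2 - 1 / 4) / x ^ 2 - ξ ^ 2 * (deriv ψ x) ^ 2 - lam) *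
              (agmonTheta ξ u ψ x) ^ 2) x := by
    intro x hx
    have h := ((hu1 x hx).mul (hu2 x hx)).mul ((hE x hx).mul (hE x hx))
    refine h.congr_deriv ?_
    have h2 : deriv (deriv u) x = ξ ^ 2 * (q x) ^ 2 * u x + ((ν ^ 2 - 1 / 4) / x ^ 2) * u x
        - lam * u x := by linarith [heq x hx]
    rw [hθ1 x hx]
    simp only [agmonTheta, h2, Pi.mul_apply]
    ring
  have hint : IntervalIntegrable (fun x => (deriv (agmonTheta ξ u ψ) x) ^ 2
          + (ξ ^ 2 * (q x) ^ 2 + (ν ^ 2 - 1 / 4) / x ^ 2 - ξ ^ 2 * (deriv ψ x) ^ 2 - lam) *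
              (agmonTheta ξ u ψ x) ^ 2) volume 0 L := by
    rw [intervalIntegrable_iff_integrableOn_Ioo_of_le hL.le]
    have hc : IntegrableOn (fun x => (ξ ^ 2 * (q x) ^ 2
        - ξ ^ 2 * (derivWithin ψ (Set.Icc 0 L) x) ^ 2 - lam) * (agmonTheta ξ u ψ x) ^ 2)
        (Set.Ioo 0 L) := by
      refine IntegrableOn.mono_set (ContinuousOn.integrableOn_Icc ?_) Ioo_subset_Icc_self
      exact (((continuousOn_const.mul (hq.pow 2)).sub
        (continuousOn_const.mul (hdψc.pow 2))).sub continuousOn_const).mul (hθc.pow 2)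
    refine IntegrableOn.congr_fun
      ((hθ'int.add (hθxint.const_mul (ν ^ 2 - 1 / 4))).add hc) ?_ measurableSet_Ioo
    intro x hx
    simp only [Pi.add_apply, hdψ x hx]
    ring
  have := intervalIntegral.integral_eq_sub_of_hasDerivAt_of_tendsto hL hderiv hint hF0 hFL
  simpa using this
end

section
/- Let ν > 0, L > 0, ξ > 0, λ ∈ ℝ, δ ∈ (0,1), and let q : [0,L] → ℝ be continuous. Assume there is x_δ ∈ (0,L) with q(x)² ≤ δ for all x ∈ [0,x_δ] and q(x)² > δ for all x ∈ (x_δ,L], and let x_δ < a < b ≤ L. Let u ∈ C²((0,L)) ∩ C⁰([0,L]) with u(0) = u(L) = 0 satisfy −u''(x) + ξ² q(x)² u(x) + ((ν² − 1/4)/x²) u(x) = λ u(x) on (0,L), with ∫₀^L u(x)² dx = 1 and λ ≤ δ ξ². Let ψ ∈ C²([0,L]) be nondecreasing with ψ = 0 on [0,x_δ] and ψ'(x)² ≤ (1−δ)² · max(q(x)² − δ, 0) for every x ∈ [0,L], and set θ := u e^{ξψ}. Assume θ' and x ↦ θ(x)/x are square-integrable on (0,L), θ(x)θ'(x) → 0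 as x → 0⁺ and as x → L⁻, and ∫₀^L θ'(x)² dx ≥ (1/4) ∫₀^L θ(x)²/x² dx (which holds automatically by the one-dimensional Hardy inequality since θ vanishes at 0). Then ∫_a^b u(x)² dx ≤ ( sup_{x∈[0,x_δ]} |q(x)² − δ| / ( (2δ − δ²) · min_{x∈[a,b]} (q(x)² − δ) ) ) · e^{−2ξψ(a)}. -/
open MeasureTheory Real Set Filter

set_option maxHeartbeats 2000000

/-- One-dimensional quantitative Agmon estimate: an `L²`-normalized eigenfunction of
`−∂_x² + ξ²q² + (ν²−1/4)/x²` with eigenvalue `λ ≤ δξ²` satisfies, on an interval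
`[a,b]` outside the classically allowed region `{q² ≤ δ} = [0,x_δ]`,
`∫_a^b u² ≤ (sup_{[0,x_δ]}|q²−δ| / ((2δ−δ²) min_{[a,b]}(q²−δ))) e^{−2ξψ(a)}`,
where `ψ` is a nondecreasing `C²` Agmon weight vanishing on `[0,x_δ]` with
`ψ'² ≤ (1−δ)²(q²−δ)₊`. -/
theorem agmon_estimate (ν L ξ lam δ xδ a b : ℝ) (q u ψ : ℝ → ℝ)
    (hν : 0 < ν) (hL : 0 < L) (hξ : 0 < ξ) (hδ : δ ∈ Set.Ioo (0 : ℝ) 1)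
    (hxδ : xδ ∈ Set.Ioo (0 : ℝ) L)
    (hq : ContinuousOn q (Set.Icc 0 L))
    (hq_le : ∀ x ∈ Set.Icc (0 : ℝ) xδ, (q x) ^ 2 ≤ δ)
    (hq_gt : ∀ x ∈ Set.Ioc xδ L, δ < (q x) ^ 2)
    (hxa : xδ < a) (hab : a < b) (hbL : b ≤ L)
    (hu_cont : ContinuousOn u (Set.Icc 0 L))
    (hu_C2 : ContDiffOn ℝ 2 u (Set.Ioo 0 L))
    (hu0 : u 0 = 0) (huL : u L = 0)
    (heq : ∀ x ∈ Set.Ioo (0 : ℝ) L,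
      -deriv (deriv u) x + ξ ^ 2 * (q x) ^ 2 * u x + ((ν ^ 2 - 1 / 4) / x ^ 2) * u x
        = lam * u x)
    (hnorm : (∫ x in (0 : ℝ)..L, (u x) ^ 2) = 1)
    (hlam : lam ≤ δ * ξ ^ 2)
    (hψ : ContDiffOn ℝ 2 ψ (Set.Icc 0 L))
    (hψ_mono : MonotoneOn ψ (Set.Icc 0 L))
    (hψ0 : ∀ x ∈ Set.Icc (0 : ℝ) xδ, ψ x = 0)
    (hψ' : ∀ x ∈ Set.Icc (0 : ℝ) L,
      (derivWithin ψ (Set.Icc 0 L) x) ^ 2 ≤ (1 - δ) ^ 2 * max ((q x) ^ 2 - δ) 0)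
    (hθ'int : MeasureTheory.IntegrableOn
      (fun x => (deriv (agmonTheta ξ u ψ) x) ^ 2) (Set.Ioo 0 L))
    (hθxint : MeasureTheory.IntegrableOn
      (fun x => (agmonTheta ξ u ψ x / x) ^ 2) (Set.Ioo 0 L))
    (hlim0 : Filter.Tendsto (fun x => agmonTheta ξ u ψ x * deriv (agmonTheta ξ u ψ) x)
      (nhdsWithin 0 (Set.Ioi 0)) (nhds 0))
    (hlimL : Filter.Tendsto (fun x => agmonTheta ξ u ψ x * deriv (agmonTheta ξ u ψ) x)
      (nhdsWithin L (Set.Iio L)) (nhds 0))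
    (hhardy : (1 / 4) * (∫ x in Set.Ioo (0 : ℝ) L, (agmonTheta ξ u ψ x / x) ^ 2)
      ≤ ∫ x in Set.Ioo (0 : ℝ) L, (deriv (agmonTheta ξ u ψ) x) ^ 2) :
    ∫ x in a..b, (u x) ^ 2
      ≤ (sSup ((fun x => |(q x) ^ 2 - δ|) '' Set.Icc 0 xδ) /
          ((2 * δ - δ ^ 2) * sInf ((fun x => (q x) ^ 2 - δ) '' Set.Icc a b))) *
        Real.exp (-2 * ξ * ψ a) := by
  obtain ⟨hδ0, hδ1⟩ := hδ
  obtain ⟨hx0, hxL⟩ := hxδ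
  set p : ℝ → ℝ := derivWithin ψ (Set.Icc 0 L) with hp
  have hLn : (0:ℝ) ≤ L := hL.le
  have hpc : ContinuousOn p (Set.Icc 0 L) :=
    hψ.continuousOn_derivWithin (uniqueDiffOn_Icc hL) (by norm_num)
  have hψc : ContinuousOn ψ (Set.Icc 0 L) := hψ.continuousOn
  set θ : ℝ → ℝ := agmonTheta ξ u ψ with hθ
  have hθx : ∀ x, θ x = u x * Real.exp (ξ * ψ x) := fun x => rfl
  have hθc : ContinuousOn θ (Set.Icc 0 L) := by
    have : ContinuousOn (fun x => u x * Real.exp (ξ * ψ x)) (Set.Icc 0 L) := by fun_prop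
    exact this
  have hψd : ∀ x ∈ Set.Ioo (0:ℝ) L, HasDerivAt ψ (p x) x := by
    intro x hx
    have h1 : DifferentiableWithinAt ℝ ψ (Set.Icc 0 L) x :=
      (hψ.differentiableOn (by norm_num)) x (Ioo_subset_Icc_self hx)
    exact h1.hasDerivWithinAt.hasDerivAt (Icc_mem_nhds hx.1 hx.2)
  have hud : ∀ x ∈ Set.Ioo (0:ℝ) L, HasDerivAt u (deriv u x) x := by
    intro x hx
    exact ((hu_C2.differentiableOn (by norm_num)) x hx).differentiableAt
      (isOpen_Ioo.mem_nhds hx) |>.hasDerivAt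
  have hudd : ∀ x ∈ Set.Ioo (0:ℝ) L, HasDerivAt (deriv u) (deriv (deriv u) x) x := by
    intro x hx
    have h1 : ContDiffOn ℝ 1 (deriv u) (Set.Ioo 0 L) :=
      hu_C2.deriv_of_isOpen isOpen_Ioo (by norm_num)
    exact ((h1.differentiableOn (by norm_num)) x hx).differentiableAt
      (isOpen_Ioo.mem_nhds hx) |>.hasDerivAt
  have hed : ∀ x ∈ Set.Ioo (0:ℝ) L,
      HasDerivAt (fun y => Real.exp (ξ * ψ y)) (Real.exp (ξ * ψ x) * (ξ * p x)) x := by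
    intro x hx
    exact ((hψd x hx).const_mul ξ).exp
  have hθd : ∀ x ∈ Set.Ioo (0:ℝ) L,
      deriv θ x = (deriv u x + ξ * p x * u x) * Real.exp (ξ * ψ x) := by
    intro x hx
    have h1 := ((hud x hx).mul (hed x hx)).deriv
    have h2 : deriv θ x = deriv (u * fun y => Real.exp (ξ * ψ y)) x := rfl
    rw [h2, h1]; ring
  -- the flux
  set W : ℝ → ℝ := fun x => u x * deriv u x * (Real.exp (ξ * ψ x) * Real.exp (ξ * ψ x)) with hW
  set G : ℝ → ℝ := fun x => (deriv θ x) ^ 2 + (ν ^ 2 - 1 / 4) * (θ x / x) ^ 2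
    + (ξ ^ 2 * (q x) ^ 2 - lam - ξ ^ 2 * (p x) ^ 2) * (θ x) ^ 2 with hG
  have hWd : ∀ x ∈ Set.Ioo (0:ℝ) L, HasDerivAt W (G x) x := by
    intro x hx
    have h1 := ((hud x hx).mul (hudd x hx)).mul ((hed x hx).mul (hed x hx))
    refine HasDerivAt.congr_deriv (f := W) h1 ?_
    have h2 : deriv (deriv u) x = ξ ^ 2 * (q x) ^ 2 * u x
        + ((ν ^ 2 - 1 / 4) / x ^ 2) * u x - lam * u x := by linarith [heq x hx]
    simp only [hG, hθd x hx, hθx, Pi.mul_apply, h2]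
    have hxne : x ≠ 0 := hx.1.ne'
    field_simp
    ring
  have hWeq : ∀ x ∈ Set.Ioo (0:ℝ) L, θ x * deriv θ x - ξ * p x * (θ x) ^ 2 = W x := by
    intro x hx
    simp only [hW, hθd x hx, hθx]
    ring
  have hθ0 : θ 0 = 0 := by rw [hθx, hu0, zero_mul]
  have hθL : θ L = 0 := by rw [hθx, huL, zero_mul]
  have hBc : ContinuousOn (fun x => ξ * p x * (θ x) ^ 2) (Set.Icc 0 L) := by fun_prop
  have hW0 : Tendsto W (nhdsWithin 0 (Set.Ioi 0)) (nhds 0) := by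
    have h1 : Tendsto (fun x => ξ * p x * (θ x) ^ 2) (nhdsWithin 0 (Set.Ioi 0)) (nhds 0) := by
      have h := (hBc 0 (left_mem_Icc.2 hLn)).tendsto
      rw [hθ0] at h
      rw [← nhdsWithin_Ioo_eq_nhdsGT hL]
      simpa using h.mono_left (nhdsWithin_mono 0 Ioo_subset_Icc_self)
    have h2 := hlim0.sub h1
    rw [sub_zero] at h2
    refine h2.congr' ?_
    filter_upwards [Ioo_mem_nhdsGT hL] with x hx using hWeq x hx
  have hWL : Tendsto W (nhdsWithin L (Set.Iio L)) (nhds 0) := by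
    have h1 : Tendsto (fun x => ξ * p x * (θ x) ^ 2) (nhdsWithin L (Set.Iio L)) (nhds 0) := by
      have h := (hBc L (right_mem_Icc.2 hLn)).tendsto
      rw [hθL] at h
      rw [← nhdsWithin_Ioo_eq_nhdsLT hL]
      simpa using h.mono_left (nhdsWithin_mono L Ioo_subset_Icc_self)
    have h2 := hlimL.sub h1
    rw [sub_zero] at h2
    refine h2.congr' ?_
    filter_upwards [Ioo_mem_nhdsLT hL] with x hx using hWeq x hx
  have hRc : ContinuousOn (fun x => (ξ ^ 2 * (q x) ^ 2 - lam - ξ ^ 2 * (p x) ^ 2) * (θ x) ^ 2)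
      (Set.Icc 0 L) := by fun_prop
  have hRi : IntegrableOn (fun x => (ξ ^ 2 * (q x) ^ 2 - lam - ξ ^ 2 * (p x) ^ 2) * (θ x) ^ 2)
      (Set.Ioo 0 L) := (hRc.integrableOn_Icc).mono_set Ioo_subset_Icc_self
  have hHi : IntegrableOn (fun x => (ν ^ 2 - 1 / 4) * (θ x / x) ^ 2) (Set.Ioo 0 L) :=
    hθxint.const_mul _
  have hGi : IntegrableOn G (Set.Ioo 0 L) := (hθ'int.add hHi).add hRi
  have hGii : IntervalIntegrable G volume 0 L :=
    (intervalIntegrable_iff_integrableOn_Ioo_of_le hLn).2 hGi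
  have hflux : ∫ x in (0:ℝ)..L, G x = 0 - 0 :=
    intervalIntegral.integral_eq_sub_of_hasDerivAt_of_tendsto hL hWd hGii hW0 hWL
  have hsplit : ∫ x in Set.Ioo (0:ℝ) L, G x = (∫ x in Set.Ioo (0:ℝ) L, (deriv θ x) ^ 2)
      + (ν ^ 2 - 1 / 4) * (∫ x in Set.Ioo (0:ℝ) L, (θ x / x) ^ 2)
      + ∫ x in Set.Ioo (0:ℝ) L, (ξ ^ 2 * (q x) ^ 2 - lam - ξ ^ 2 * (p x) ^ 2) * (θ x) ^ 2 := by
    have hs : IntegrableOn (fun x => (deriv θ x) ^ 2 + (ν ^ 2 - 1 / 4) * (θ x / x) ^ 2)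
        (Set.Ioo 0 L) := hθ'int.add hHi
    rw [← integral_const_mul, ← integral_add hθ'int hHi, ← integral_add hs hRi]
  have hconv : ∀ f : ℝ → ℝ, ∫ x in (0:ℝ)..L, f x = ∫ x in Set.Ioo (0:ℝ) L, f x := by
    intro f
    rw [intervalIntegral.integral_of_le hLn, integral_Ioc_eq_integral_Ioo]
  have hHpos : 0 ≤ ∫ x in Set.Ioo (0:ℝ) L, (θ x / x) ^ 2 := integral_nonneg fun x => sq_nonneg _
  have hRneg : ∫ x in (0:ℝ)..L, (ξ ^ 2 * (q x) ^ 2 - lam - ξ ^ 2 * (p x) ^ 2) * (θ x) ^ 2 ≤ 0 := by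
    rw [hconv] at hflux ⊢
    rw [hsplit] at hflux
    nlinarith [mul_nonneg (sq_nonneg ν) hHpos]
  set g : ℝ → ℝ := fun x => ((q x) ^ 2 - δ - (p x) ^ 2) * (θ x) ^ 2 with hg
  have hgc : ContinuousOn g (Set.Icc 0 L) := by fun_prop
  have hii : ∀ f : ℝ → ℝ, ContinuousOn f (Set.Icc 0 L) → ∀ c d : ℝ, 0 ≤ c → c ≤ d → d ≤ L →
      IntervalIntegrable f volume c d := by
    intro f hf c d hc hcd hd
    exact (hf.mono (Icc_subset_Icc hc hd)).intervalIntegrable_of_Icc hcd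
  have hgneg : ∫ x in (0:ℝ)..L, g x ≤ 0 := by
    have h1 : ∫ x in (0:ℝ)..L, ξ ^ 2 * g x
        ≤ ∫ x in (0:ℝ)..L, (ξ ^ 2 * (q x) ^ 2 - lam - ξ ^ 2 * (p x) ^ 2) * (θ x) ^ 2 := by
      refine intervalIntegral.integral_mono_on hLn
        ((hii g hgc 0 L le_rfl hLn le_rfl).const_mul _) (hii _ hRc 0 L le_rfl hLn le_rfl) ?_
      intro x hx
      simp only [hg]
      nlinarith [mul_nonneg (sub_nonneg.2 hlam) (sq_nonneg (θ x))]
    rw [intervalIntegral.integral_const_mul] at h1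
    have h2 : 0 < ξ ^ 2 := by positivity
    by_contra hc
    push Not at hc
    nlinarith [mul_pos h2 hc]
  have ha0 : 0 ≤ a := by linarith
  have haL : a ≤ L := by linarith
  have hb0 : 0 ≤ b := by linarith
  have hc2 : 0 < 2 * δ - δ ^ 2 := by nlinarith
  have hglow : ∀ x ∈ Set.Icc xδ L, (2 * δ - δ ^ 2) * ((q x) ^ 2 - δ) * (θ x) ^ 2 ≤ g x
      ∨ 0 ≤ g x ∧ x = xδ := by
    intro x hx
    have hxI : x ∈ Set.Icc 0 L := ⟨by linarith [hx.1], hx.2⟩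
    have h1 := hψ' x hxI
    rcases eq_or_lt_of_le hx.1 with h | h
    · left
      have h2 := hq_le x ⟨hxI.1, h.symm.le⟩
      rw [max_eq_right (by linarith)] at h1
      have hqx : δ ≤ (q x) ^ 2 := by
        have hcl : Tendsto (fun y => (q y) ^ 2) (nhdsWithin xδ (Set.Ioi xδ))
            (nhds ((q xδ) ^ 2)) := by
          rw [← nhdsWithin_Ioo_eq_nhdsGT hxL]
          have := ((hq.pow 2) xδ ⟨hx0.le, hxL.le⟩).tendsto
          exact this.mono_left (nhdsWithin_mono _
            (fun y hy => ⟨by linarith [hy.1], hy.2.le⟩))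
        rw [← h]
        refine ge_of_tendsto hcl ?_
        filter_upwards [Ioo_mem_nhdsGT hxL] with y hy using (hq_gt y ⟨hy.1, hy.2.le⟩).le
      have h3 : (q x) ^ 2 - δ = 0 := by linarith
      simp only [hg]
      rw [h3]
      have h4 : p x ^ 2 = 0 := le_antisymm (by simpa using h1) (sq_nonneg _)
      rw [h4]; simp
    · left
      have h2 := hq_gt x ⟨h, hx.2⟩
      rw [max_eq_left (by linarith)] at h1
      simp only [hg]
      refine mul_le_mul_of_nonneg_right ?_ (sq_nonneg _)
      nlinarith
  have hglow' : ∀ x ∈ Set.Icc xδ L, 0 ≤ g x := by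
    intro x hx
    have hxI : x ∈ Set.Icc 0 L := ⟨by linarith [hx.1], hx.2⟩
    rcases hglow x hx with h | h
    · rcases eq_or_lt_of_le hx.1 with h' | h'
      · refine le_trans ?_ h
        have hqx : δ ≤ (q x) ^ 2 := by
          have hcl : Tendsto (fun y => (q y) ^ 2) (nhdsWithin xδ (Set.Ioi xδ))
              (nhds ((q xδ) ^ 2)) := by
            rw [← nhdsWithin_Ioo_eq_nhdsGT hxL]
            have := ((hq.pow 2) xδ ⟨hx0.le, hxL.le⟩).tendsto
            exact this.mono_left (nhdsWithin_mono _
              (fun y hy => ⟨by linarith [hy.1], hy.2.le⟩))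
          rw [← h']
          refine ge_of_tendsto hcl ?_
          filter_upwards [Ioo_mem_nhdsGT hxL] with y hy using (hq_gt y ⟨hy.1, hy.2.le⟩).le
        exact mul_nonneg (mul_nonneg hc2.le (by linarith)) (sq_nonneg _)
      · refine le_trans ?_ h
        have := hq_gt x ⟨h', hx.2⟩
        exact mul_nonneg (mul_nonneg hc2.le (by linarith)) (sq_nonneg _)
    · exact h.1
  -- sup and inf
  set S := sSup ((fun x => |(q x) ^ 2 - δ|) '' Set.Icc 0 xδ) with hS
  set m := sInf ((fun x => (q x) ^ 2 - δ) '' Set.Icc a b) with hm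
  have hSle : ∀ x ∈ Set.Icc 0 xδ, |(q x) ^ 2 - δ| ≤ S := by
    intro x hx
    have hc : ContinuousOn (fun x => |(q x) ^ 2 - δ|) (Set.Icc 0 xδ) := by
      have := hq.mono (Icc_subset_Icc_right hxL.le)
      fun_prop
    exact le_csSup (isCompact_Icc.image_of_continuousOn hc).bddAbove (mem_image_of_mem _ hx)
  have hS0 : 0 ≤ S := (abs_nonneg _).trans (hSle 0 ⟨le_rfl, hx0.le⟩)
  have hmc : ContinuousOn (fun x => (q x) ^ 2 - δ) (Set.Icc a b) := by
    have := hq.mono (Icc_subset_Icc ha0 hbL)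
    fun_prop
  have hmK := isCompact_Icc.image_of_continuousOn hmc
  have hmle : ∀ x ∈ Set.Icc a b, m ≤ (q x) ^ 2 - δ := fun x hx =>
    csInf_le hmK.bddBelow (mem_image_of_mem _ hx)
  have hm0 : 0 < m := by
    obtain ⟨x, hx, hxm⟩ := hmK.sInf_mem ((nonempty_Icc.2 hab.le).image _)
    have h1 := hq_gt x ⟨by linarith [hx.1], by linarith [hx.2]⟩
    have h2 : (q x) ^ 2 - δ = m := hxm
    linarith
  have huc2 : ContinuousOn (fun x => (u x) ^ 2) (Set.Icc 0 L) := by fun_prop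
  have hI1 : -S ≤ ∫ x in (0:ℝ)..xδ, g x := by
    have h1 : ∫ x in (0:ℝ)..xδ, (-S) * (u x) ^ 2 ≤ ∫ x in (0:ℝ)..xδ, g x := by
      refine intervalIntegral.integral_mono_on hx0.le
        ((hii _ huc2 0 xδ le_rfl hx0.le hxL.le).const_mul _)
        (hii _ hgc 0 xδ le_rfl hx0.le hxL.le) ?_
      intro x hx
      have h1 := hψ' x ⟨hx.1, hx.2.trans hxL.le⟩
      rw [max_eq_right (by linarith [hq_le x hx])] at h1
      have h4 : p x ^ 2 = 0 := le_antisymm (by simpa using h1) (sq_nonneg _)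
      have h5 : θ x = u x := by rw [hθx, hψ0 x hx]; simp
      simp only [hg]
      rw [h4, h5]
      refine mul_le_mul_of_nonneg_right ?_ (sq_nonneg _)
      linarith [neg_abs_le ((q x) ^ 2 - δ), hSle x hx]
    rw [intervalIntegral.integral_const_mul] at h1
    have h2 : ∫ x in (0:ℝ)..xδ, (u x) ^ 2 ≤ 1 := by
      have h3 := intervalIntegral.integral_add_adjacent_intervals
        (hii _ huc2 0 xδ le_rfl hx0.le hxL.le) (hii _ huc2 xδ L hx0.le hxL.le le_rfl)
      have h4 : 0 ≤ ∫ x in xδ..L, (u x) ^ 2 :=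
        intervalIntegral.integral_nonneg hxL.le fun x _ => sq_nonneg _
      linarith
    have h5 := mul_le_mul_of_nonneg_left h2 hS0
    linarith
  have hI3 : (2 * δ - δ ^ 2) * m * Real.exp (2 * ξ * ψ a) * ∫ x in a..b, (u x) ^ 2
      ≤ ∫ x in a..b, g x := by
    rw [← intervalIntegral.integral_const_mul]
    refine intervalIntegral.integral_mono_on hab.le
      ((hii _ huc2 a b ha0 hab.le hbL).const_mul _) (hii _ hgc a b ha0 hab.le hbL) ?_
    intro x hx
    have hxL' : x ≤ L := hx.2.trans hbL
    have hxx : xδ < x := by linarith [hx.1]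
    have hlow : (2 * δ - δ ^ 2) * ((q x) ^ 2 - δ) * (θ x) ^ 2 ≤ g x := by
      rcases hglow x ⟨hxx.le, hxL'⟩ with h | h
      · exact h
      · exact absurd h.2 hxx.ne'
    refine le_trans ?_ hlow
    have h1 : Real.exp (2 * ξ * ψ a) ≤ Real.exp (2 * ξ * ψ x) := by
      apply Real.exp_le_exp.2
      have := hψ_mono ⟨ha0, haL⟩ ⟨by linarith, hxL'⟩ hx.1
      exact mul_le_mul_of_nonneg_left this (by positivity)
    have h2 : (θ x) ^ 2 = Real.exp (2 * ξ * ψ x) * (u x) ^ 2 := by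
      rw [hθx, mul_pow, ← Real.exp_nat_mul, mul_comm]
      congr 2
      push_cast; ring
    rw [h2, ← mul_assoc]
    have h3 := hmle x hx
    have h4 := hc2.le
    have h5 : 0 ≤ (2 * δ - δ ^ 2) * ((q x) ^ 2 - δ) := mul_nonneg h4 (hm0.le.trans h3)
    gcongr
  have hI2 : 0 ≤ ∫ x in xδ..a, g x :=
    intervalIntegral.integral_nonneg hxa.le fun x hx => hglow' x ⟨hx.1, hx.2.trans haL⟩
  have hI4 : 0 ≤ ∫ x in b..L, g x :=
    intervalIntegral.integral_nonneg hbL fun x hx => hglow' x ⟨by linarith [hx.1], hx.2⟩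
  have e1 := intervalIntegral.integral_add_adjacent_intervals
    (hii _ hgc 0 xδ le_rfl hx0.le hxL.le) (hii _ hgc xδ a hx0.le hxa.le haL)
  have e2 := intervalIntegral.integral_add_adjacent_intervals
    (hii _ hgc 0 a le_rfl ha0 haL) (hii _ hgc a b ha0 hab.le hbL)
  have e3 := intervalIntegral.integral_add_adjacent_intervals
    (hii _ hgc 0 b le_rfl hb0 hbL) (hii _ hgc b L hb0 hbL le_rfl)
  have hfin : (2 * δ - δ ^ 2) * m * Real.exp (2 * ξ * ψ a) * ∫ x in a..b, (u x) ^ 2 ≤ S := by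
    linarith
  have hexp : Real.exp (-2 * ξ * ψ a) = (Real.exp (2 * ξ * ψ a))⁻¹ := by
    rw [← Real.exp_neg]; congr 1; ring
  have hE := Real.exp_pos (2 * ξ * ψ a)
  rw [hexp, ← div_eq_mul_inv, div_div, le_div_iff₀ (mul_pos (mul_pos hc2 hm0) hE)]
  linarith
end
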